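/- Let F be a real-valued real-analytic function on a neighborhood of 0 in ℂ³ × ℝ (variables (z₁, z₂, ζ, u)) of weighted order ≥ 4, meaning F(t²z₁, t z₂, t ζ, t³u)/t³ → 0 as t → 0 for every fixed (z₁, z₂, ζ, u) near 0 (weights [z₁] = 2, [z₂] = [ζ] = 1, [u] = 3). Let Γ = {(z₁, z₂, ζ, w) near 0 in ℂ⁴ : Im w = 2Re(z₁·conj(ζ)) + 2Re(z₂·conj(ζ)²) + F(z₁, z₂, ζ, Re w)}, and let ρ(z₁,z₂,ζ,w) = Im w − 2Re(z₁·conj(ζ)) − 2Re(z₂·conj(ζ)²) − F(z₁, z₂, ζ, Re w). Call a 4-tuple (f, g, h, e) of germs at 0 of holomorphic functions on ℂ⁴ tangent to Γ if for every point p ∈ Γ near 0 the real Fréchet derivative of ρ at p evaluated on the vector (f(p), g(p), h(p), e(p)) ∈ ℂ⁴ ≅ ℝ⁸ vanishes. Then the real vector space of tangent tuples has dimension at most 16, and its subspace of tuples with f(0) = g(0) = h(0) = e(0) = 0 has dimension at most 9. -/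

import Mathlib

open Complex ComplexConjugate Filter Topology

/-- Coordinates on `ℂ⁴`: `p 0, p 1` are `z₁, z₂`; `p 2` is `ζ`; `p 3` is `w`. -/
abbrev E4 : Type := Fin 4 → ℂ

/-- Defining function of the perturbed model hypersurface:
`ρ = Im w − 2 Re (z₁ ζ̄) − 2 Re (z₂ ζ̄²) − F (z₁, z₂, ζ, Re w)`. -/
noncomputable def rho (F : ℂ × ℂ × ℂ × ℝ → ℝ) (p : E4) : ℝ :=
  (p 3).im - 2 * (p 0 * conj (p 2)).re - 2 * (p 1 * (conj (p 2)) ^ 2).re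
    - F (p 0, p 1, p 2, (p 3).re)

/-- The hypersurface `Γ = {ρ = 0}`. -/
noncomputable def Gam (F : ℂ × ℂ × ℂ × ℝ → ℝ) : Set E4 := {p | rho F p = 0}

/-- Germs at `0 ∈ ℂ⁴` of complex-valued functions. -/
abbrev G4 : Type := Filter.Germ (𝓝 (0 : E4)) ℂ

/-- Germs at `0` of holomorphic 4-tuples `(f, g, h, e)` tangent to `Γ` near `0`:
at every point `p ∈ Γ` near `0`, the real Fréchet derivative of `ρ` at `p` kills the
vector `(f p, g p, h p, e p)`. -/
noncomputable def tangentGerms (F : ℂ × ℂ × ℂ × ℝ → ℝ) : Set (G4 × G4 × G4 × G4) :=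
  {t | ∃ f g h e : E4 → ℂ, t = (↑f, ↑g, ↑h, ↑e) ∧
    AnalyticAt ℂ f 0 ∧ AnalyticAt ℂ g 0 ∧ AnalyticAt ℂ h 0 ∧ AnalyticAt ℂ e 0 ∧
    ∀ᶠ p : E4 in 𝓝 0, p ∈ Gam F →
      fderiv ℝ (rho F) p ![f p, g p, h p, e p] = 0}

/-- As `tangentGerms`, with the extra requirement that the tuple vanishes at `0`. -/
noncomputable def tangentGerms0 (F : ℂ × ℂ × ℂ × ℝ → ℝ) : Set (G4 × G4 × G4 × G4) :=
  {t | ∃ f g h e : E4 → ℂ, t = (↑f, ↑g, ↑h, ↑e) ∧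
    f 0 = 0 ∧ g 0 = 0 ∧ h 0 = 0 ∧ e 0 = 0 ∧
    AnalyticAt ℂ f 0 ∧ AnalyticAt ℂ g 0 ∧ AnalyticAt ℂ h 0 ∧ AnalyticAt ℂ e 0 ∧
    ∀ᶠ p : E4 in 𝓝 0, p ∈ Gam F →
      fderiv ℝ (rho F) p ![f p, g p, h p, e p] = 0}

/-!
Give `z₁, z₂, ζ, w` the weights `2, 1, 1, 3`. In the Taylor expansion of a tangent field along the
weighted dilations of `ℂ⁴`, the first nonzero component is tangent to the model hypersurface
`F = 0`: dilating `Γ` by `1 / t` turns `F` into its weighted dilate divided by `t ^ 3`, which tends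
to zero with its derivatives as `t → 0`.

Tangency to the model is a polynomial identity on real points. Polarization turns it into a
functional equation for holomorphic functions of `(p, q)`, which leaves only finitely many
coefficients free, each in a known weighted degree. A field whose components have all these
coefficients zero vanishes, by induction on the weighted degree, so the coefficients embed the
tangent germs in `ℝ¹⁶`, and those that vanish at the origin in `ℝ⁹`.
-/

section TimeDerivative

variable {𝕜 E G : Type*} [RCLike 𝕜] [NormedAddCommGroup E] [NormedSpace 𝕜 E]
  [NormedAddCommGroup G] [NormedSpace 𝕜 G] {Φ Ψ : 𝕜 × E → G} {x₀ : E} {n : ℕ}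

variable (𝕜) in
/-- The partial derivative `∂Φ/∂t` of a function of `(t, x)`. -/
noncomputable def timeDeriv (Φ : 𝕜 × E → G) (y : 𝕜 × E) : G := fderiv 𝕜 Φ y (1, 0)

variable (𝕜) in
/-- The coefficient of `t ^ n` in the Taylor expansion of `Φ (t, x)` at `t = 0`. -/
noncomputable def taylorCoeff (n : ℕ) (Φ : 𝕜 × E → G) (x : E) : G :=
  (n.factorial : 𝕜)⁻¹ • (timeDeriv 𝕜)^[n] Φ (0, x)

theorem taylorCoeff_eq_zero_iff {x : E} :
    taylorCoeff 𝕜 n Φ x = 0 ↔ (timeDeriv 𝕜)^[n] Φ (0, x) = 0 := by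
  simp [taylorCoeff, Nat.factorial_ne_zero]

theorem taylorCoeff_succ (n : ℕ) (Φ : 𝕜 × E → G) (x : E) :
    taylorCoeff 𝕜 (n + 1) Φ x = (n + 1 : 𝕜)⁻¹ • taylorCoeff 𝕜 n (timeDeriv 𝕜 Φ) x := by
  simp only [taylorCoeff, Nat.factorial_succ, Nat.cast_mul, Nat.cast_succ, mul_inv, mul_smul,
    Function.iterate_succ_apply]

theorem taylorCoeff_smul (c : 𝕜) (Φ : 𝕜 × E → G) (n : ℕ) :
    taylorCoeff 𝕜 n (c • Φ) = c • taylorCoeff 𝕜 n Φ := by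
  have hcomm : Function.Commute (timeDeriv 𝕜) fun Φ : 𝕜 × E → G => c • Φ := fun Φ => by
    ext y
    simp [timeDeriv, fderiv_const_smul_field]
  ext x
  rw [taylorCoeff, (hcomm.iterate_left n).eq]
  exact smul_comm _ _ _

theorem hasDerivAt_timeDeriv {t : 𝕜} {x : E} (h : DifferentiableAt 𝕜 Φ (t, x)) :
    HasDerivAt (fun s => Φ (s, x)) (timeDeriv 𝕜 Φ (t, x)) t :=
  h.hasFDerivAt.comp_hasDerivAt t ((hasDerivAt_id t).prodMk (hasDerivAt_const t x))

theorem iterate_timeDeriv_eventuallyEq {y : 𝕜 × E} (h : Φ =ᶠ[𝓝 y] Ψ) (n : ℕ) :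
    (timeDeriv 𝕜)^[n] Φ =ᶠ[𝓝 y] (timeDeriv 𝕜)^[n] Ψ := by
  induction n generalizing Φ Ψ with
  | zero => exact h
  | succ _ ih => exact ih (h.fderiv.fun_comp fun L => L (1, 0))

theorem norm_sub_pow_smul_le {f f' : 𝕜 → G} {a : G} {ε : ℝ} {t : 𝕜} (h₀ : f 0 = 0)
    (hf : ∀ s, ‖s‖ ≤ ‖t‖ → HasDerivAt f (f' s) s)
    (hf' : ∀ s, ‖s‖ ≤ ‖t‖ → ‖f' s - s ^ n • a‖ ≤ ε * ‖s ^ n‖) (hε : 0 ≤ ε) :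
    ‖f t - t ^ (n + 1) • (n + 1 : 𝕜)⁻¹ • a‖ ≤ ε * ‖t ^ (n + 1)‖ := by
  have hn : (n + 1 : 𝕜) ≠ 0 := by exact_mod_cast n.succ_ne_zero
  have hderiv (s : 𝕜) (hs : s ∈ Metric.closedBall (0 : 𝕜) ‖t‖) :
      HasDerivWithinAt (fun s => f s - s ^ (n + 1) • (n + 1 : 𝕜)⁻¹ • a) (f' s - s ^ n • a)
        (Metric.closedBall 0 ‖t‖) s := by
    refine (((hf s (by simpa using hs)).sub
      ((hasDerivAt_pow (n + 1) s).smul_const _)).congr_deriv ?_).hasDerivWithinAt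
    simp [smul_smul, mul_right_comm _ (s ^ n), mul_inv_cancel₀ hn]
  have hbound (s : 𝕜) (hs : s ∈ Metric.closedBall (0 : 𝕜) ‖t‖) :
      ‖f' s - s ^ n • a‖ ≤ ε * ‖t‖ ^ n := by
    rw [mem_closedBall_zero_iff] at hs
    refine (hf' s hs).trans ?_
    rw [norm_pow]
    gcongr
  simpa [h₀, norm_pow, pow_succ, mul_assoc] using
    (convex_closedBall (0 : 𝕜) ‖t‖).norm_image_sub_le_of_norm_hasDerivWithin_le hderiv hbound
      (Metric.mem_closedBall_self (norm_nonneg t)) (by simp : t ∈ Metric.closedBall (0 : 𝕜) ‖t‖)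

variable [CompleteSpace G]

theorem analyticAt_timeDeriv {y : 𝕜 × E} (h : AnalyticAt 𝕜 Φ y) :
    AnalyticAt 𝕜 (timeDeriv 𝕜 Φ) y :=
  ((ContinuousLinearMap.apply 𝕜 G ((1, 0) : 𝕜 × E)).analyticAt _).comp h.fderiv

theorem analyticAt_iterate_timeDeriv {y : 𝕜 × E} (h : AnalyticAt 𝕜 Φ y) (n : ℕ) :
    AnalyticAt 𝕜 ((timeDeriv 𝕜)^[n] Φ) y := by
  induction n generalizing Φ with
  | zero => exact h
  | succ _ ih => exact ih (analyticAt_timeDeriv h)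

theorem analyticAt_taylorCoeff (h : AnalyticAt 𝕜 Φ (0, x₀)) (n : ℕ) :
    AnalyticAt 𝕜 (taylorCoeff 𝕜 n Φ) x₀ :=
  ((analyticAt_iterate_timeDeriv h n).comp₂ analyticAt_const analyticAt_id).const_smul

theorem iterate_timeDeriv_fderiv {y : 𝕜 × E} (h : AnalyticAt 𝕜 Φ y) (n : ℕ) :
    (timeDeriv 𝕜)^[n] (fderiv 𝕜 Φ) =ᶠ[𝓝 y] fderiv 𝕜 ((timeDeriv 𝕜)^[n] Φ) := by
  induction n generalizing Φ with
  | zero => rfl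
  | succ n ih =>
    refine (iterate_timeDeriv_eventuallyEq ?_ n).trans (ih (analyticAt_timeDeriv h))
    filter_upwards [h.eventually_analyticAt] with y hy
    refine ContinuousLinearMap.ext fun v => ?_
    have symm : IsSymmSndFDerivAt 𝕜 Φ y := hy.contDiffAt.isSymmSndFDerivAt_of_omega
    have : HasFDerivAt (timeDeriv 𝕜 Φ) ((fderiv 𝕜 (fderiv 𝕜 Φ) y).flip (1, 0)) y :=
      hy.fderiv.differentiableAt.hasFDerivAt.clm_apply (hasFDerivAt_const _ y) |>.congr_fderiv
        (by simp)
    rw [this.fderiv]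
    exact symm ..

theorem isLittleO_sub_taylorCoeff (hΦ : AnalyticAt 𝕜 Φ (0, x₀))
    (h : ∀ j < n, ∀ᶠ x in 𝓝 x₀, taylorCoeff 𝕜 j Φ x = 0) :
    (fun y => Φ y - y.1 ^ n • taylorCoeff 𝕜 n Φ x₀) =o[𝓝 (0, x₀)] fun y => y.1 ^ n := by
  induction n generalizing Φ with
  | zero =>
    simpa [taylorCoeff, Asymptotics.isLittleO_one_iff] using
      hΦ.continuousAt.sub_const (Φ (0, x₀))
  | succ n ih =>
    replace ih := ih (analyticAt_timeDeriv hΦ) fun j hj => by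
      simpa only [taylorCoeff_eq_zero_iff, Function.iterate_succ_apply] using h (j + 1) (by lia)
    refine Asymptotics.isLittleO_iff.2 fun ε hε => ?_
    have hnear := hΦ.eventually_analyticAt.and (Asymptotics.isLittleO_iff.1 ih hε)
    rw [nhds_prod_eq] at hnear ⊢
    obtain ⟨P, hP, Q, hQ, hPQ⟩ := eventually_prod_iff.1 hnear
    obtain ⟨δ, hδ, hball⟩ := Metric.eventually_nhds_iff_ball.1 hP
    filter_upwards [prod_mem_prod (Metric.ball_mem_nhds 0 hδ) (hQ.and (h 0 n.succ_pos))]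
      with ⟨t, x⟩ ⟨ht, hx, hΦx⟩
    have hs (s : 𝕜) (hst : ‖s‖ ≤ ‖t‖) := hPQ (hball s (by
      simpa using hst.trans_lt (by simpa using ht))) hx
    rw [taylorCoeff_succ]
    exact norm_sub_pow_smul_le (taylorCoeff_eq_zero_iff.1 hΦx)
      (fun s hst => hasDerivAt_timeDeriv (hs s hst).1.differentiableAt) (fun s hst => (hs s hst).2)
      hε.le

theorem tendsto_inv_pow_smul {α : Type*} {l : Filter α} {t : α → 𝕜} {x : α → E}
    (hΦ : AnalyticAt 𝕜 Φ (0, x₀)) (h : ∀ j < n, ∀ᶠ x in 𝓝 x₀, taylorCoeff 𝕜 j Φ x = 0)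
    (ht : Tendsto t l (𝓝[≠] 0)) (hx : Tendsto x l (𝓝 x₀)) :
    Tendsto (fun a => (t a ^ n)⁻¹ • Φ (t a, x a)) l (𝓝 (taylorCoeff 𝕜 n Φ x₀)) := by
  obtain ⟨ht, hne⟩ := tendsto_nhdsWithin_iff.1 ht
  have := (isLittleO_sub_taylorCoeff hΦ h).comp_tendsto (ht.prodMk_nhds hx)
    |>.tendsto_inv_smul_nhds_zero.add_const (taylorCoeff 𝕜 n Φ x₀)
  rw [zero_add] at this
  refine this.congr' (hne.mono fun a ha => ?_)
  simp [smul_sub, inv_smul_smul₀ (pow_ne_zero n ha)]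

theorem taylorCoeff_eventually_eq_zero (hΦ : AnalyticAt 𝕜 Φ (0, x₀))
    (h : ∀ᶠ x in 𝓝 x₀, Tendsto (fun t => (t ^ n)⁻¹ • Φ (t, x)) (𝓝[≠] 0) (𝓝 0)) {j : ℕ}
    (hj : j ≤ n) : ∀ᶠ x in 𝓝 x₀, taylorCoeff 𝕜 j Φ x = 0 := by
  induction j using Nat.strong_induction_on with
  | _ j ih =>
    have hlow : ∀ᶠ x in 𝓝 x₀, ∀ i < j, ∀ᶠ x in 𝓝 x, taylorCoeff 𝕜 i Φ x = 0 :=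
      (Set.finite_Iio j).eventually_all.2 fun i hi => (ih i hi (hi.le.trans hj)).eventually_nhds
    have han : ∀ᶠ x in 𝓝 x₀, AnalyticAt 𝕜 Φ (0, x) :=
      (Continuous.prodMk_right (0 : 𝕜)).tendsto x₀ |>.eventually hΦ.eventually_analyticAt
    filter_upwards [h, hlow, han] with x hx hlow han
    refine tendsto_nhds_unique (tendsto_inv_pow_smul han hlow tendsto_id tendsto_const_nhds) ?_
    have hpow : Tendsto (fun t : 𝕜 => t ^ (n - j)) (𝓝[≠] 0) (𝓝 (0 ^ (n - j))) :=
      ((continuous_pow _).tendsto 0).mono_left nhdsWithin_le_nhds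
    have hlim := hpow.smul hx
    rw [smul_zero] at hlim
    refine hlim.congr' (eventually_mem_nhdsWithin.mono fun t (ht : t ≠ 0) => ?_)
    rw [smul_smul, pow_sub₀ t ht hj, mul_right_comm, mul_inv_cancel₀ (pow_ne_zero n ht),
      one_mul]
    rfl

theorem taylorCoeff_fderiv_apply (hΦ : AnalyticAt 𝕜 Φ (0, x₀)) (n : ℕ) (v : 𝕜 × E) :
    taylorCoeff 𝕜 n (fderiv 𝕜 Φ) x₀ v =
      (n.factorial : 𝕜)⁻¹ • fderiv 𝕜 ((timeDeriv 𝕜)^[n] Φ) (0, x₀) v := by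
  rw [taylorCoeff, (iterate_timeDeriv_fderiv hΦ n).eq_of_nhds, smul_apply]

theorem taylorCoeff_fderiv_apply_zero_left (hΦ : AnalyticAt 𝕜 Φ (0, x₀))
    (h : ∀ᶠ x in 𝓝 x₀, taylorCoeff 𝕜 n Φ x = 0) (v : E) :
    taylorCoeff 𝕜 n (fderiv 𝕜 Φ) x₀ (0, v) = 0 := by
  have hslice := (analyticAt_iterate_timeDeriv hΦ n).differentiableAt.hasFDerivAt.comp x₀
    (hasFDerivAt_prodMk_right (0 : 𝕜) x₀)
  have hconst : (timeDeriv 𝕜)^[n] Φ ∘ Prod.mk 0 =ᶠ[𝓝 x₀] fun _ => 0 :=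
    h.mono fun x => taylorCoeff_eq_zero_iff.1
  have := congr($((hslice.congr_of_eventuallyEq hconst.symm).unique (hasFDerivAt_const 0 x₀)) v)
  rw [taylorCoeff_fderiv_apply hΦ]
  simpa using congr((n.factorial : 𝕜)⁻¹ • $this)

theorem taylorCoeff_fderiv_eq_zero (hΦ : AnalyticAt 𝕜 Φ (0, x₀))
    (h : ∀ᶠ x in 𝓝 x₀, taylorCoeff 𝕜 n Φ x = 0) (hsucc : taylorCoeff 𝕜 (n + 1) Φ x₀ = 0) :
    taylorCoeff 𝕜 n (fderiv 𝕜 Φ) x₀ = 0 := by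
  refine ContinuousLinearMap.ext fun ⟨s, v⟩ => ?_
  have htime : fderiv 𝕜 ((timeDeriv 𝕜)^[n] Φ) (0, x₀) (1, 0) = 0 := by
    rwa [taylorCoeff_eq_zero_iff, Function.iterate_succ_apply'] at hsucc
  have hsplit : ((s, v) : 𝕜 × E) = s • (1, 0) + (0, v) := by simp
  rw [hsplit, map_add, map_smul, taylorCoeff_fderiv_apply_zero_left hΦ h,
    taylorCoeff_fderiv_apply hΦ, htime]
  simp

theorem taylorCoeff_add (hΦ : AnalyticAt 𝕜 Φ (0, x₀)) (hΨ : AnalyticAt 𝕜 Ψ (0, x₀)) (n : ℕ) :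
    taylorCoeff 𝕜 n (Φ + Ψ) x₀ = taylorCoeff 𝕜 n Φ x₀ + taylorCoeff 𝕜 n Ψ x₀ := by
  induction n generalizing Φ Ψ with
  | zero => simp [taylorCoeff]
  | succ n ih =>
    have hderiv : timeDeriv 𝕜 (Φ + Ψ) =ᶠ[𝓝 (0, x₀)] timeDeriv 𝕜 Φ + timeDeriv 𝕜 Ψ := by
      filter_upwards [hΦ.eventually_analyticAt, hΨ.eventually_analyticAt] with y hΦ hΨ
      simp [timeDeriv, fderiv_add hΦ.differentiableAt hΨ.differentiableAt]
    rw [taylorCoeff_succ, taylorCoeff_succ, taylorCoeff_succ, ← smul_add,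
      ← ih (analyticAt_timeDeriv hΦ) (analyticAt_timeDeriv hΨ), taylorCoeff, taylorCoeff,
      (iterate_timeDeriv_eventuallyEq hderiv n).eq_of_nhds]

theorem taylorCoeff_eq_zero_of_eventually_eq_zero (hΦ : AnalyticAt 𝕜 Φ (0, x₀))
    (h : ∀ᶠ t in 𝓝 0, Φ (t, x₀) = 0) (n : ℕ) : taylorCoeff 𝕜 n Φ x₀ = 0 := by
  induction n generalizing Φ with
  | zero => simpa [taylorCoeff] using h.self_of_nhds
  | succ n ih =>
    rw [taylorCoeff_succ, ih (analyticAt_timeDeriv hΦ), smul_zero]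
    have hnear : ∀ᶠ t in 𝓝 0, AnalyticAt 𝕜 Φ (t, x₀) :=
      (Continuous.prodMk_left x₀).tendsto 0 |>.eventually hΦ.eventually_analyticAt
    filter_upwards [h.eventually_nhds, hnear] with t ht hΦ
    exact (hasDerivAt_timeDeriv hΦ.differentiableAt).unique
      ((hasDerivAt_const t (0 : G)).congr_of_eventuallyEq ht)

theorem eventually_eq_zero_of_taylorCoeff_eq_zero (hΦ : AnalyticAt 𝕜 Φ (0, x₀))
    (h : ∀ n, ∀ᶠ x in 𝓝 x₀, taylorCoeff 𝕜 n Φ x = 0) : ∀ᶠ t in 𝓝 0, Φ (t, x₀) = 0 := by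
  by_contra hne
  have hslice : AnalyticAt 𝕜 (fun t => Φ (t, x₀)) 0 := hΦ.comp₂ analyticAt_id analyticAt_const
  obtain ⟨n, g, hg, hg₀, hfactor⟩ := hslice.exists_eventuallyEq_pow_smul_nonzero_iff.2 hne
  have hlim := tendsto_inv_pow_smul hΦ (fun j _ => h j) (tendsto_id (x := 𝓝[≠] (0 : 𝕜)))
    tendsto_const_nhds (n := n)
  rw [(h n).self_of_nhds] at hlim
  refine hg₀ (tendsto_nhds_unique (hg.continuousAt.mono_left nhdsWithin_le_nhds) (hlim.congr' ?_))
  filter_upwards [hfactor.filter_mono nhdsWithin_le_nhds, eventually_mem_nhdsWithin]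
    with t ht (hne : t ≠ 0)
  rw [id_eq, ht, sub_zero, inv_smul_smul₀ (pow_ne_zero n hne)]

theorem tendsto_inv_pow_smul_fderiv {α : Type*} {l : Filter α} {t : α → 𝕜} {x v : α → E} {w : E}
    (hΦ : AnalyticAt 𝕜 Φ (0, x₀)) (h : ∀ j ≤ n, ∀ᶠ x in 𝓝 x₀, taylorCoeff 𝕜 j Φ x = 0)
    (ht : Tendsto t l (𝓝[≠] 0)) (hx : Tendsto x l (𝓝 x₀)) (hv : Tendsto v l (𝓝 w)) :
    Tendsto (fun a => (t a ^ n)⁻¹ • fderiv 𝕜 Φ (t a, x a) (0, v a)) l (𝓝 0) := by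
  have hnear : ∀ᶠ x in 𝓝 x₀, AnalyticAt 𝕜 Φ (0, x) :=
    (Continuous.prodMk_right (0 : 𝕜)).tendsto x₀ |>.eventually hΦ.eventually_analyticAt
  have hlow (j : ℕ) (hj : j < n) : ∀ᶠ x in 𝓝 x₀, taylorCoeff 𝕜 j (fderiv 𝕜 Φ) x = 0 := by
    filter_upwards [hnear, (h j hj.le).eventually_nhds, h (j + 1) hj] with x hx h₀ h₁
    exact taylorCoeff_fderiv_eq_zero hx h₀ h₁
  have hlim := (isBoundedBilinearMap_apply.continuous.tendsto (_, ((0 : 𝕜), w))).comp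
    ((tendsto_inv_pow_smul hΦ.fderiv hlow ht hx).prodMk_nhds (tendsto_const_nhds.prodMk_nhds hv))
  rwa [taylorCoeff_fderiv_apply_zero_left hΦ (h n le_rfl)] at hlim

end TimeDerivative

theorem tendsto_ofReal_nhdsNE_zero : Tendsto ((↑) : ℝ → ℂ) (𝓝[≠] 0) (𝓝[≠] 0) := by
  simpa using (hasDerivAt_id (0 : ℝ)).ofReal_comp.tendsto_nhdsNE (by simp)

theorem eq_zero_of_eventually_ofReal_eq_zero {F : Type*} [NormedAddCommGroup F] [NormedSpace ℂ F]
    [CompleteSpace F] {f : ℂ → F} (hf : Differentiable ℂ f)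
    (h : ∀ᶠ s : ℝ in 𝓝 0, f s = 0) : f = 0 :=
  AnalyticOnNhd.eq_of_frequently_eq (z₀ := 0) (fun z _ => hf.analyticAt z) analyticOnNhd_const
    (tendsto_ofReal_nhdsNE_zero.frequently (h.filter_mono nhdsWithin_le_nhds).frequently)

/- Write `(p, q) = x + I y` with `x`, `y` in the totally real subspace `{(p, star p)}`, and use the
identity theorem in each coefficient of `r x + s y`. -/
theorem eq_zero_of_eventually_apply_star_eq_zero {E F : Type*} [NormedAddCommGroup E]
    [NormedSpace ℂ E] [StarAddMonoid E] [StarModule ℂ E] [NormedAddCommGroup F] [NormedSpace ℂ F]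
    [CompleteSpace F] {Φ : E × E → F} (hΦ : Differentiable ℂ Φ)
    (h : ∀ᶠ p in 𝓝 0, Φ (p, star p) = 0) : Φ = 0 := by
  ext ⟨p, q⟩
  let x : E := (1 / 2 : ℂ) • (p + star q)
  let y : E := (-I / 2) • (p - star q)
  let line (r s : ℂ) : E × E := (r • x + s • y, r • star x + s • star y)
  have hline (r s : ℝ) : line r s =
      ((r : ℂ) • x + (s : ℂ) • y, star ((r : ℂ) • x + (s : ℂ) • y)) := by
    simp [line]
  have hreal : ∀ᶠ rs : ℝ × ℝ in 𝓝 (0, 0), Φ (line rs.1 rs.2) = 0 := by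
    have : Continuous fun rs : ℝ × ℝ => (rs.1 : ℂ) • x + (rs.2 : ℂ) • y := by fun_prop
    simp only [hline]
    exact this.tendsto' (0, 0) 0 (by simp) |>.eventually h
  have hleft : ∀ᶠ r : ℝ in 𝓝 0, ∀ s : ℂ, Φ (line r s) = 0 := by
    filter_upwards [hreal.curry_nhds] with r hr
    exact congrFun (eq_zero_of_eventually_ofReal_eq_zero (f := fun s => Φ (line r s))
      (hΦ.comp (by fun_prop)) hr)
  have hright (r s : ℂ) : Φ (line r s) = 0 :=
    congrFun (eq_zero_of_eventually_ofReal_eq_zero (f := fun r => Φ (line r s))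
      (hΦ.comp (by fun_prop)) (hleft.mono fun r hr => hr s)) r
  have hpq : line 1 I = (p, q) := by
    have hI : I * (-I / 2) = 1 / 2 := by linear_combination -I_sq / 2
    have hI' : I * (I / 2) = -(1 / 2) := by linear_combination I_sq / 2
    simp only [line, x, y, star_smul, star_add, star_sub, star_star, smul_smul]
    ext <;> simp [hI, hI'] <;> module
  rw [← hpq, hright, Pi.zero_apply]

theorem vec_eta {α : Type*} (p : Fin 4 → α) : ![p 0, p 1, p 2, p 3] = p := by
  ext i; fin_cases i <;> rfl

theorem hasDerivAt_id_mul_zero {θ : ℂ → ℂ} (hθ : Differentiable ℂ θ) :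
    HasDerivAt (fun s => s * θ s) (θ 0) 0 := by
  simpa using (hasDerivAt_id (0 : ℂ)).fun_mul (hθ 0).hasDerivAt

theorem exists_affine_of_sub_eq_mul {f κ S : ℂ → ℂ}
    (h : ∀ w t, f w - f t = (w - t) * (κ w + S t)) : ∃ a s, ∀ t,
      S t = S 0 + s * t ∧ f t = f 0 + a * t + s * t ^ 2 := by
  have hκ (t) : κ t = S t + (κ 0 - S 0) := by
    rcases eq_or_ne t 0 with rfl | ht
    · ring
    apply mul_left_cancel₀ ht
    linear_combination -h t 0 - h 0 t
  have hS (t) : S t = S 0 + (S 1 - S 0) * t := by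
    linear_combination h t 1 + h 1 0 + h 0 t + (t - 1) * hκ t + hκ 1
  refine ⟨κ 0 + S 0, S 1 - S 0, fun t => ⟨hS t, ?_⟩⟩
  linear_combination h t 0 + t * hκ t + t * hS t

/-- The polarization, up to the factor `k / (2i)`, of the model function
`Im w − 2 Re (z₁ ζ̄) − 2 Re (z₂ ζ̄²)`: `q` takes the place of the conjugate of `p`. -/
def polarRho (k : ℂ) (p q : E4) : ℂ :=
  p 3 - q 3 - k * (p 0 * q 2 + p 1 * q 2 ^ 2 + q 0 * p 2 + q 1 * p 2 ^ 2)

/-- The derivative of `polarRho k` at `(p, q)` along `(v, u)`. -/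
def polarRhoDeriv (k : ℂ) (p q v u : E4) : ℂ :=
  v 3 - u 3 - k * (v 0 * q 2 + v 1 * q 2 ^ 2 + v 2 * (q 0 + 2 * p 2 * q 1)
    + u 0 * p 2 + u 1 * p 2 ^ 2 + u 2 * (p 0 + 2 * q 2 * p 1))

/-- The pair of entire fields `X` in the variables `p` and `Y` in the variables `q` is tangent to
the complexified model hypersurface `polarRho k p q = 0` of `ℂ⁴ × ℂ⁴`. -/
structure PolarizedTangent (k : ℂ) (X Y : E4 → E4) : Prop where
  ne_zero : k ≠ 0
  differentiable_left : Differentiable ℂ X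
  differentiable_right : Differentiable ℂ Y
  tangent : ∀ p q, polarRho k p q = 0 → polarRhoDeriv k p q (X p) (Y q) = 0

namespace PolarizedTangent

variable {k : ℂ} {X Y : E4 → E4}

theorem swap (H : PolarizedTangent k X Y) : PolarizedTangent (-k) Y X where
  ne_zero := neg_ne_zero.2 H.ne_zero
  differentiable_left := H.differentiable_right
  differentiable_right := H.differentiable_left
  tangent p q hpq := by
    have := H.tangent q p (by simp only [polarRho] at hpq ⊢; linear_combination -hpq)
    simp only [polarRhoDeriv] at this ⊢
    linear_combination -this

theorem tangent_vec (H : PolarizedTangent k X Y) {z₁ z₂ y w a b c t : ℂ}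
    (h : w = t + k * (z₁ * c + z₂ * c ^ 2 + a * y + b * y ^ 2)) :
    X ![z₁, z₂, y, w] 3 - Y ![a, b, c, t] 3 =
      k * (X ![z₁, z₂, y, w] 0 * c + X ![z₁, z₂, y, w] 1 * c ^ 2
        + X ![z₁, z₂, y, w] 2 * (a + 2 * y * b) + Y ![a, b, c, t] 0 * y
        + Y ![a, b, c, t] 1 * y ^ 2 + Y ![a, b, c, t] 2 * (z₁ + 2 * c * z₂)) := by
  have := H.tangent ![z₁, z₂, y, w] ![a, b, c, t] (by
    simp only [polarRho, Matrix.cons_val]; linear_combination h)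
  simp only [polarRhoDeriv, Matrix.cons_val] at this
  linear_combination this

theorem axis_three_eq (H : PolarizedTangent k X Y) (t : ℂ) :
    X ![0, 0, 0, t] 3 = Y ![0, 0, 0, t] 3 := by
  linear_combination H.tangent_vec (z₁ := 0) (z₂ := 0) (y := 0) (w := t) (a := 0) (b := 0)
    (c := 0) (t := t) (by ring)

theorem apply_three (H : PolarizedTangent k X Y) (z₁ z₂ y t : ℂ) :
    X ![z₁, z₂, y, t] 3 = X ![0, 0, 0, t] 3
      + k * (Y ![0, 0, 0, t] 2 * z₁ + Y ![0, 0, 0, t] 0 * y + Y ![0, 0, 0, t] 1 * y ^ 2) := by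
  linear_combination H.tangent_vec (z₁ := z₁) (z₂ := z₂) (y := y) (w := t) (a := 0) (b := 0)
    (c := 0) (t := t) (by ring) - H.axis_three_eq t

theorem differentiable_vec (H : PolarizedTangent k X Y) (i : Fin 4) {u v w x : ℂ → ℂ}
    (hu : Differentiable ℂ u) (hv : Differentiable ℂ v) (hw : Differentiable ℂ w)
    (hx : Differentiable ℂ x) : Differentiable ℂ fun s => X ![u s, v s, w s, x s] i := by
  refine (differentiable_pi.1 H.differentiable_left i).comp (differentiable_pi.2 fun j => ?_)
  fin_cases j <;> assumption

theorem hasDerivAt_three_comp (H : PolarizedTangent k X Y) (z₁ z₂ y : ℂ) {w : ℂ → ℂ} {w' s : ℂ}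
    (hw : HasDerivAt w w' s) : HasDerivAt (fun s => X ![z₁, z₂, y, w s] 3)
      (deriv (fun t => X ![z₁, z₂, y, t] 3) (w s) * w') s :=
  (H.differentiable_vec 3 (differentiable_const z₁) (differentiable_const z₂)
    (differentiable_const y) differentiable_id (w s)).hasDerivAt.comp s hw

-- Differentiate the tangency identity along `q = (sα, sβ, sγ, t)`, with `p = (z₁, z₂, y, w(s))`.
theorem exists_lineDeriv (H : PolarizedTangent k X Y) (α β γ t : ℂ) : ∃ p q r : ℂ, ∀ z₁ z₂ y,
    γ * X ![z₁, z₂, y, t] 0 + (α + 2 * y * β) * X ![z₁, z₂, y, t] 2 =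
      (γ * z₁ + α * y + β * y ^ 2) * deriv (fun s => X ![z₁, z₂, y, s] 3) t
        + γ * X ![0, 0, 0, t] 0 + α * X ![0, 0, 0, t] 2 - 2 * γ * Y ![0, 0, 0, t] 2 * z₂
        - p * y - q * y ^ 2 - r * z₁ := by
  let ψ (i : Fin 4) (s : ℂ) : ℂ := Y ![s * α, s * β, s * γ, t] i
  have hψ (i) : Differentiable ℂ (ψ i) := H.swap.differentiable_vec i
    (by fun_prop) (by fun_prop) (by fun_prop) (by fun_prop)
  refine ⟨deriv (ψ 0) 0, deriv (ψ 1) 0, deriv (ψ 2) 0, fun z₁ z₂ y => ?_⟩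
  let l : ℂ := k * (γ * z₁ + α * y + β * y ^ 2)
  let w (s : ℂ) : ℂ := t + s * (l + s * (k * γ ^ 2 * z₂))
  have hw : Differentiable ℂ w := by fun_prop
  have hw0 : HasDerivAt w l 0 := by
    simpa [w] using (hasDerivAt_id_mul_zero
      (by fun_prop : Differentiable ℂ fun s => l + s * (k * γ ^ 2 * z₂))).const_add t
  let φ (i : Fin 4) (s : ℂ) : ℂ := X ![z₁, z₂, y, w s] i
  have hφ (i) : Differentiable ℂ (φ i) := H.differentiable_vec i
    (by fun_prop) (by fun_prop) (by fun_prop) hw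
  have hleft : HasDerivAt (φ 3) (deriv (fun s => X ![z₁, z₂, y, s] 3) t * l) 0 := by
    simpa [w] using H.hasDerivAt_three_comp z₁ z₂ y hw0
  let θ (s : ℂ) : ℂ := γ * φ 0 s + s * γ ^ 2 * φ 1 s + (α + 2 * y * β) * φ 2 s
    + 2 * γ * z₂ * ψ 2 s - γ * X ![0, 0, 0, t] 0 - α * X ![0, 0, 0, t] 2
    - s * γ ^ 2 * X ![0, 0, 0, t] 1
  have hθ : Differentiable ℂ θ := by fun_prop
  have identity : φ 3 = fun s => k * (s * θ s) + Y ![0, 0, 0, t] 3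
      + k * (ψ 0 s * y + ψ 1 s * y ^ 2 + ψ 2 s * z₁) := by
    funext s
    linear_combination H.tangent_vec (z₁ := z₁) (z₂ := z₂) (y := y) (w := w s) (a := s * α)
      (b := s * β) (c := s * γ) (t := t) (by simp only [w, l]; ring)
      + H.swap.apply_three (s * α) (s * β) (s * γ) t
  have hright : HasDerivAt (φ 3) (k * θ 0 + k * (deriv (ψ 0) 0 * y + deriv (ψ 1) 0 * y ^ 2
      + deriv (ψ 2) 0 * z₁)) 0 := by
    rw [identity]
    exact (((hasDerivAt_id_mul_zero hθ).const_mul k).add_const _).fun_add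
      (((((hψ 0 0).hasDerivAt.mul_const y).fun_add ((hψ 1 0).hasDerivAt.mul_const (y ^ 2))).fun_add
        ((hψ 2 0).hasDerivAt.mul_const z₁)).const_mul k)
  have key := hleft.unique hright
  simp only [θ, φ, w, l, zero_mul, add_zero] at key
  apply mul_left_cancel₀ H.ne_zero
  simp only [ψ, zero_mul] at key ⊢
  linear_combination -key

theorem deriv_apply_three (H : PolarizedTangent k X Y) (z₁ z₂ y t : ℂ) :
    deriv (fun s => X ![z₁, z₂, y, s] 3) t = deriv (fun s => X ![0, 0, 0, s] 3) t
      + k * (deriv (fun s => Y ![0, 0, 0, s] 2) t * z₁ + deriv (fun s => Y ![0, 0, 0, s] 0) t * y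
        + deriv (fun s => Y ![0, 0, 0, s] 1) t * y ^ 2) := by
  have hX (i) : Differentiable ℂ fun s => X ![0, 0, 0, s] i := H.differentiable_vec i
    (by fun_prop) (by fun_prop) (by fun_prop) (by fun_prop)
  have hY (i) : Differentiable ℂ fun s => Y ![0, 0, 0, s] i := H.swap.differentiable_vec i
    (by fun_prop) (by fun_prop) (by fun_prop) (by fun_prop)
  rw [funext fun s => H.apply_three z₁ z₂ y s]
  exact ((hX 3 t).hasDerivAt.fun_add ((((hY 2 t).hasDerivAt.mul_const z₁).fun_add
    ((hY 0 t).hasDerivAt.mul_const y)).fun_add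
    ((hY 1 t).hasDerivAt.mul_const (y ^ 2)) |>.const_mul k)).deriv

theorem exists_two_eq (H : PolarizedTangent k X Y) (t : ℂ) :
    deriv (fun s => Y ![0, 0, 0, s] 1) t = 0 ∧ deriv (fun s => Y ![0, 0, 0, s] 2) t = 0 ∧
      ∃ C, ∀ z₁ z₂ y, X ![z₁, z₂, y, t] 2 = X ![0, 0, 0, t] 2 + C * y
        + k / 2 * deriv (fun s => Y ![0, 0, 0, s] 0) t * y ^ 2 := by
  obtain ⟨p₁, q₁, r₁, h₁⟩ := H.exists_lineDeriv 1 0 0 t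
  obtain ⟨p₂, q₂, r₂, h₂⟩ := H.exists_lineDeriv 0 1 0 t
  replace h₁ z₁ z₂ y := H.deriv_apply_three z₁ z₂ y t ▸ h₁ z₁ z₂ y
  replace h₂ z₁ z₂ y := H.deriv_apply_three z₁ z₂ y t ▸ h₂ z₁ z₂ y
  generalize deriv (fun s => X ![0, 0, 0, s] 3) t = e at h₁ h₂ ⊢
  generalize deriv (fun s => Y ![0, 0, 0, s] 0) t = f at h₁ h₂ ⊢
  generalize deriv (fun s => Y ![0, 0, 0, s] 1) t = g at h₁ h₂ ⊢
  generalize deriv (fun s => Y ![0, 0, 0, s] 2) t = h at h₁ h₂ ⊢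
  have compare (z₁ y : ℂ) : 2 * y * (y * (e + k * (h * z₁ + f * y + g * y ^ 2))
      + X ![0, 0, 0, t] 2 - p₁ * y - q₁ * y ^ 2 - r₁ * z₁) =
      y ^ 2 * (e + k * (h * z₁ + f * y + g * y ^ 2)) - p₂ * y - q₂ * y ^ 2 - r₂ * z₁ := by
    linear_combination h₂ z₁ 0 y - 2 * y * h₁ z₁ 0 y
  have hr₂ : r₂ = 0 := by linear_combination compare 1 0 - compare 0 0
  have hh : h = 0 := by
    apply mul_left_cancel₀ H.ne_zero
    linear_combination (compare 1 1 - compare 0 1 + compare 1 (-1) - compare 0 (-1)) / 2 - hr₂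
  have hr₁ : r₁ = 0 := by
    linear_combination (compare 1 (-1) - compare 0 (-1) - compare 1 1 + compare 0 1) / 4
  have hg : g = 0 := by
    apply mul_left_cancel₀ H.ne_zero
    linear_combination (compare 0 2 + compare 0 (-2) - 4 * (compare 0 1 + compare 0 (-1))) / 24
  have hq₁ : q₁ = k * f / 2 := by
    linear_combination (compare 0 2 - compare 0 (-2) - 2 * (compare 0 1 - compare 0 (-1))) / (-24)
  refine ⟨hg, hh, e - p₁, fun z₁ z₂ y => ?_⟩
  subst hg hh hr₁ hq₁
  linear_combination h₁ z₁ z₂ y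

theorem axis_one_two_eq (H : PolarizedTangent k X Y) (t : ℂ) :
    X ![0, 0, 0, t] 1 = X ![0, 0, 0, 0] 1 ∧ X ![0, 0, 0, t] 2 = X ![0, 0, 0, 0] 2 := by
  have hX (i) : Differentiable ℂ fun s => X ![0, 0, 0, s] i := H.differentiable_vec i
    (by fun_prop) (by fun_prop) (by fun_prop) (by fun_prop)
  exact ⟨is_const_of_deriv_eq_zero (hX 1) (fun s => (H.swap.exists_two_eq s).1) t 0,
    is_const_of_deriv_eq_zero (hX 2) (fun s => (H.swap.exists_two_eq s).2.1) t 0⟩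

theorem exists_zero_eq (H : PolarizedTangent k X Y) (t : ℂ) : ∃ A B, ∀ z₂ y,
    X ![0, z₂, y, t] 0 =
      X ![0, 0, 0, t] 0 - 2 * Y ![0, 0, 0, t] 2 * z₂ + A * y + B * y ^ 2 := by
  obtain ⟨p, q, r, h⟩ := H.exists_lineDeriv 0 0 1 t
  refine ⟨-p, -q, fun z₂ y => ?_⟩
  linear_combination h 0 z₂ y

theorem exists_quadratic (H : PolarizedTangent k X Y) (t : ℂ) : ∃ A B B' M, ∀ z₂ y,
    X ![0, z₂, y, t] 0 = X ![0, 0, 0, t] 0 - 2 * Y ![0, 0, 0, t] 2 * z₂ + A * y - B' * y ^ 2 ∧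
    X ![0, 0, y, t] 1 = X ![0, 0, 0, t] 1 + B * y + M * y ^ 2 ∧
    Y ![0, 0, y, t] 0 = Y ![0, 0, 0, t] 0 - A * y - B * y ^ 2 ∧
    Y ![0, 0, y, t] 1 = Y ![0, 0, 0, t] 1 + B' * y - M * y ^ 2 := by
  obtain ⟨A, D, hX⟩ := H.exists_zero_eq t
  obtain ⟨A', D', hY⟩ := H.swap.exists_zero_eq t
  have pairing (y c : ℂ) : c * (A * y + D * y ^ 2) + y * (A' * c + D' * c ^ 2)
      + (X ![0, 0, y, t] 1 - X ![0, 0, 0, t] 1) * c ^ 2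
      + (Y ![0, 0, c, t] 1 - Y ![0, 0, 0, t] 1) * y ^ 2 = 0 := by
    apply mul_left_cancel₀ H.ne_zero
    linear_combination H.apply_three 0 0 y t - H.swap.apply_three 0 0 c t
      - H.tangent_vec (z₁ := 0) (z₂ := 0) (y := y) (w := t) (a := 0) (b := 0) (c := c) (t := t)
        (by ring) + H.axis_three_eq t - k * c * hX 0 y - k * y * hY 0 c
  obtain ⟨M, hM⟩ : ∃ M, ∀ y, X ![0, 0, y, t] 1 = X ![0, 0, 0, t] 1 - D' * y + M * y ^ 2 :=
    ⟨Y ![0, 0, 0, t] 1 - (Y ![0, 0, 1, t] 1 + Y ![0, 0, -1, t] 1) / 2, fun y => by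
      linear_combination (pairing y 1 + pairing y (-1)) / 2⟩
  obtain ⟨M', hM'⟩ : ∃ M', ∀ c, Y ![0, 0, c, t] 1 = Y ![0, 0, 0, t] 1 - D * c + M' * c ^ 2 :=
    ⟨X ![0, 0, 0, t] 1 - (X ![0, 0, 1, t] 1 + X ![0, 0, -1, t] 1) / 2, fun c => by
      linear_combination (pairing 1 c + pairing (-1) c) / 2⟩
  have hAM : A + A' = 0 ∧ M + M' = 0 := by
    constructor
    · linear_combination (pairing 1 1 - pairing 1 (-1) - hM' 1 + hM' (-1)) / 2
    · linear_combination (pairing 1 1 + pairing 1 (-1)) / 2 - hM 1 - (hM' 1 + hM' (-1)) / 2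
  refine ⟨A, -D', -D, M, fun z₂ y => ⟨?_, ?_, ?_, ?_⟩⟩
  · linear_combination hX z₂ y
  · linear_combination hM y
  · linear_combination hY 0 y + y * hAM.1
  · linear_combination hM' y + y ^ 2 * hAM.2

theorem apply_zero_add (H : PolarizedTangent k X Y) (z₂ y t w : ℂ) :
    X ![0, z₂, y, w] 0 =
      X ![0, z₂, y, t] 0 + deriv (fun s => X ![0, 0, 0, s] 0) t * (w - t) := by
  choose A B B' M hq using H.exists_quadratic
  obtain ⟨-, -, C, hC⟩ := H.swap.exists_two_eq t
  obtain ⟨z, rfl⟩ : ∃ z, w = t + k * z := ⟨(w - t) / k, by field_simp [H.ne_zero]; ring⟩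
  -- The part of the tangency identity that is odd in the third coordinate of `q`.
  have odd : X ![0, 0, 0, t + k * z] 0 + A (t + k * z) * y - B' (t + k * z) * y ^ 2 =
      X ![0, 0, 0, t] 0 + A t * y - B' t * y ^ 2
        + deriv (fun s => X ![0, 0, 0, s] 0) t * (k * z) := by
    have h (c : ℂ) (hc : c ^ 2 = 1) := H.tangent_vec (z₁ := 0) (z₂ := z) (y := y)
      (w := t + k * z) (a := 0) (b := 0) (c := c) (t := t) (by rw [hc]; ring)
    apply mul_left_cancel₀ H.ne_zero
    linear_combination (h (-1) (by norm_num) - h 1 (by norm_num)) / 2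
      - (H.swap.apply_three 0 0 1 t - H.swap.apply_three 0 0 (-1) t) / 2
      - k * (hq (t + k * z) z y).1 - k * y / 2 * ((hq t 0 1).2.2.1 - (hq t 0 (-1)).2.2.1)
      - k * y ^ 2 / 2 * ((hq t 0 1).2.2.2 - (hq t 0 (-1)).2.2.2)
      - k * z * (hC 0 0 1 + hC 0 0 (-1))
      + 2 * k * z * (H.swap.axis_one_two_eq (t + k * z)).2
      - 2 * k * z * (H.swap.axis_one_two_eq t).2
  linear_combination (hq (t + k * z) z₂ y).1 - (hq t z₂ y).1 + odd
    - 2 * z₂ * (H.swap.axis_one_two_eq (t + k * z)).2 + 2 * z₂ * (H.swap.axis_one_two_eq t).2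

theorem deriv_axis_zero_eq (H : PolarizedTangent k X Y) (t w : ℂ) :
    deriv (fun s => X ![0, 0, 0, s] 0) t = deriv (fun s => X ![0, 0, 0, s] 0) w := by
  rcases eq_or_ne w t with rfl | hwt
  · rfl
  apply mul_right_cancel₀ (sub_ne_zero.2 hwt)
  linear_combination -H.apply_zero_add 0 0 t w - H.apply_zero_add 0 0 w t

theorem even_slice (H : PolarizedTangent k X Y) {t B B' M C A : ℂ}
    (hY₀ : ∀ y, Y ![0, 0, y, t] 0 = Y ![0, 0, 0, t] 0 - A * y - B * y ^ 2)
    (hY₁ : ∀ y, Y ![0, 0, y, t] 1 = Y ![0, 0, 0, t] 1 + B' * y - M * y ^ 2)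
    (hY₂ : ∀ y, Y ![0, 0, y, t] 2 = Y ![0, 0, 0, t] 2 + C * y
      + -k / 2 * deriv (fun s => X ![0, 0, 0, s] 0) t * y ^ 2) (z y σ : ℂ) :
    k * σ * X ![0, z, y, t + k * z * σ] 1 =
      X ![0, 0, 0, t + k * z * σ] 3 - X ![0, 0, 0, t] 3 + k * σ * (X ![0, 0, 0, 0] 1
        + k * deriv (fun s => Y ![0, 0, 0, s] 0) t * z * y + B * y + M * y ^ 2 - 2 * z * C) := by
  obtain ⟨c, rfl⟩ : ∃ c, σ = c ^ 2 :=
    (IsAlgClosed.exists_pow_nat_eq σ two_pos).imp fun _ => Eq.symm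
  have h (c' : ℂ) (hc : c' ^ 2 = c ^ 2) := H.tangent_vec (z₁ := 0) (z₂ := z) (y := y)
    (w := t + k * z * c ^ 2) (a := 0) (b := 0) (c := c') (t := t) (by rw [hc]; ring)
  linear_combination -(h c rfl + h (-c) (by ring)) / 2 + H.apply_three 0 z y (t + k * z * c ^ 2)
    - (H.swap.apply_three 0 0 c t + H.swap.apply_three 0 0 (-c) t) / 2 + H.axis_three_eq t
    + k * y * H.swap.apply_zero_add 0 0 t (t + k * z * c ^ 2)
    + k * y ^ 2 * ((H.swap.axis_one_two_eq (t + k * z * c ^ 2)).1 - (H.swap.axis_one_two_eq t).1)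
    + k * c ^ 2 * (H.axis_one_two_eq t).1
    - k * y / 2 * (hY₀ c + hY₀ (-c)) - k * y ^ 2 / 2 * (hY₁ c + hY₁ (-c))
    - k * z * c * (hY₂ c - hY₂ (-c))

theorem exists_uniform_quadratic (H : PolarizedTangent k X Y) : ∃ A B B' M, ∀ t z₂ y,
    X ![0, z₂, y, t] 0 = X ![0, 0, 0, t] 0 - 2 * Y ![0, 0, 0, t] 2 * z₂ + A * y - B' * y ^ 2 ∧
    X ![0, 0, y, t] 1 = X ![0, 0, 0, t] 1 + B * y + M * y ^ 2 ∧
    Y ![0, 0, y, t] 0 = Y ![0, 0, 0, t] 0 - A * y - B * y ^ 2 ∧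
    Y ![0, 0, y, t] 1 = Y ![0, 0, 0, t] 1 + B' * y - M * y ^ 2 := by
  choose A B B' M hq using H.exists_quadratic
  have hA (t) : A t = A 0 := by
    linear_combination ((hq 0 0 1).1 - (hq 0 0 (-1)).1 - (hq t 0 1).1 + (hq t 0 (-1)).1) / 2
      + (H.apply_zero_add 0 1 0 t - H.apply_zero_add 0 (-1) 0 t) / 2
  have hB' (t) : B' t = B' 0 := by
    linear_combination ((hq t 0 1).1 + (hq t 0 (-1)).1 - (hq 0 0 1).1 - (hq 0 0 (-1)).1) / 2
      - (H.apply_zero_add 0 1 0 t + H.apply_zero_add 0 (-1) 0 t) / 2 + H.apply_zero_add 0 0 0 t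
  have hB (t) : B t = B 0 := by
    linear_combination ((hq t 0 1).2.2.1 + (hq t 0 (-1)).2.2.1 - (hq 0 0 1).2.2.1
      - (hq 0 0 (-1)).2.2.1) / 2 - (H.swap.apply_zero_add 0 1 0 t
      + H.swap.apply_zero_add 0 (-1) 0 t) / 2 + H.swap.apply_zero_add 0 0 0 t
  -- Fix the last coordinate `w` of `p`: the coefficient of `y²` does not depend on that of `q`.
  have hM (t w) (h : w ≠ t) : M t = (X ![0, 1, 1, w] 1 + X ![0, 1, -1, w] 1) / 2
      - X ![0, 1, 0, w] 1 := by
    obtain ⟨-, -, C, hC⟩ := H.swap.exists_two_eq t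
    obtain ⟨σ, rfl⟩ : ∃ σ, w = t + k * 1 * σ := ⟨(w - t) / k, by field_simp [H.ne_zero]; ring⟩
    have slice := H.even_slice (fun y => (hq t 0 y).2.2.1) (fun y => (hq t 0 y).2.2.2) (hC 0 0) 1
    have hσ : k * σ ≠ 0 := by simpa using h
    apply mul_left_cancel₀ hσ
    linear_combination -(slice 1 σ + slice (-1) σ) / 2 + slice 0 σ
  have hM' (t) : M t = M 0 := by
    obtain ⟨w, hw⟩ := Infinite.exists_notMem_finset ({t, 0} : Finset ℂ)
    simp only [Finset.mem_insert, Finset.mem_singleton, not_or] at hw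
    rw [hM t w hw.1, hM 0 w hw.2]
  refine ⟨A 0, B 0, B' 0, M 0, fun t => ?_⟩
  rw [← hA t, ← hB t, ← hB' t, ← hM' t]
  exact hq t

theorem exists_axis_three_quadratic (H : PolarizedTangent k X Y) : ∃ C d s, ∀ t,
    X ![0, 0, 0, t] 3 = X ![0, 0, 0, 0] 3 + d * t + s * t ^ 2 ∧ ∀ z₁ z₂ y,
      Y ![z₁, z₂, y, t] 2 = Y ![0, 0, 0, 0] 2 + (C + s / 2 * t) * y
        + -k / 2 * deriv (fun s => X ![0, 0, 0, s] 0) 0 * y ^ 2 := by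
  obtain ⟨A, B, B', M, hq⟩ := H.exists_uniform_quadratic
  choose _ _ C hC using H.swap.exists_two_eq
  obtain ⟨d, s, hs⟩ := exists_affine_of_sub_eq_mul (f := fun t => X ![0, 0, 0, t] 3)
    (κ := fun w => X ![0, 1, 0, w] 1 - X ![0, 0, 0, 0] 1) (S := fun t => 2 * C t) fun w t => by
      obtain ⟨σ, rfl⟩ : ∃ σ, w = t + k * 1 * σ := ⟨(w - t) / k, by field_simp [H.ne_zero]; ring⟩
      linear_combination -H.even_slice (fun y => (hq t 0 y).2.2.1) (fun y => (hq t 0 y).2.2.2)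
        (hC t 0 0) 1 0 σ
  refine ⟨C 0, d, s, fun t => ⟨(hs t).2, fun z₁ z₂ y => ?_⟩⟩
  linear_combination hC t z₁ z₂ y + (H.swap.axis_one_two_eq t).2 + y / 2 * (hs t).1
    - k / 2 * y ^ 2 * H.deriv_axis_zero_eq t 0

theorem exists_axis_three_affine (H : PolarizedTangent k X Y) : ∃ C C' d, ∀ t,
    X ![0, 0, 0, t] 3 = X ![0, 0, 0, 0] 3 + d * t ∧
    (∀ z₁ z₂ y, X ![z₁, z₂, y, t] 2 = X ![0, 0, 0, 0] 2 + C * y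
      + k / 2 * deriv (fun s => Y ![0, 0, 0, s] 0) 0 * y ^ 2) ∧
    ∀ z₁ z₂ y, Y ![z₁, z₂, y, t] 2 = Y ![0, 0, 0, 0] 2 + C' * y
      + -k / 2 * deriv (fun s => X ![0, 0, 0, s] 0) 0 * y ^ 2 := by
  obtain ⟨A, B, B', M, hq⟩ := H.exists_uniform_quadratic
  obtain ⟨C', d, s, h⟩ := H.exists_axis_three_quadratic
  obtain ⟨C, d', s', h'⟩ := H.swap.exists_axis_three_quadratic
  obtain rfl : s' = s := by
    linear_combination ((h 1).1 + (h (-1)).1 - (h' 1).1 - (h' (-1)).1 - H.axis_three_eq 1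
      - H.axis_three_eq (-1) + 2 * H.axis_three_eq 0) / 2
  set φ := deriv (fun s => X ![0, 0, 0, s] 0) 0
  set φ' := deriv (fun s => Y ![0, 0, 0, s] 0) 0
  obtain rfl : s' = 0 := by
    have const (z : ℂ) : k ^ 2 * s' / 2 * z = k * (X ![0, 0, 0, 0] 0 + A - B' + k * φ)
        + k * (X ![0, 0, 0, 0] 1 + B + M) + k * (X ![0, 0, 0, 0] 2 + C + k * s' / 2 + k / 2 * φ')
        + k * (Y ![1, 0, 1, 0] 0 + Y ![1, 0, 1, 0] 1 - Y ![0, 0, 0, 0] 0 - φ' * k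
          - Y ![0, 0, 0, 0] 1) - X ![0, 0, 0, k * 1] 3 + Y ![1, 0, 1, 0] 3 := by
      have slice := H.even_slice (t := k * 1) (fun y => (hq (k * 1) 0 y).2.2.1)
        (fun y => (hq (k * 1) 0 y).2.2.2) (C := C' + s' / 2 * (k * 1)) (fun y => by
          linear_combination (h (k * 1)).2 0 0 y - (h (k * 1)).2 0 0 0
            + k / 2 * y ^ 2 * H.deriv_axis_zero_eq (k * 1) 0) z 1 1
      linear_combination H.tangent_vec (z₁ := 0) (z₂ := z) (y := 1) (w := k * 1 + k * z * 1)
          (a := 1) (b := 0) (c := 1) (t := 0) (by ring)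
        - H.apply_three 0 z 1 (k * 1 + k * z * 1)
        - k * H.swap.apply_zero_add 0 0 0 (k * 1 + k * z * 1)
        - k * (H.swap.axis_one_two_eq (k * 1 + k * z * 1)).1
        + k * H.apply_zero_add z 1 0 (k * 1 + k * z * 1) + k * (hq 0 z 1).1 + slice
        + k ^ 2 * z * H.swap.deriv_axis_zero_eq (k * 1) 0
        + k * (h' (k * 1 + k * z * 1)).2 0 z 1 + 2 * k * z * (h 0).2 1 0 1
    apply mul_left_cancel₀ (pow_ne_zero 2 H.ne_zero)
    linear_combination 2 * (const 1 - const 0)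
  refine ⟨C, C', d, fun t => ⟨?_, fun z₁ z₂ y => ?_, fun z₁ z₂ y => ?_⟩⟩
  · linear_combination (h t).1
  · linear_combination (h' t).2 z₁ z₂ y
  · linear_combination (h t).2 z₁ z₂ y

theorem exists_normal_form (H : PolarizedTangent k X Y) : ∃ φ φ' A B B' M C C' d, ∀ y t,
    (X ![0, 0, y, t] 0 = X 0 0 + φ * t + A * y - B' * y ^ 2 ∧
      X ![0, 0, y, t] 1 = X 0 1 + B * y + M * y ^ 2 ∧
      X ![0, 0, y, t] 2 = X 0 2 + C * y + k / 2 * φ' * y ^ 2 ∧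
      X ![0, 0, 0, t] 3 = X 0 3 + d * t) ∧
    (Y ![0, 0, y, t] 0 = Y 0 0 + φ' * t - A * y - B * y ^ 2 ∧
      Y ![0, 0, y, t] 1 = Y 0 1 + B' * y - M * y ^ 2 ∧
      Y ![0, 0, y, t] 2 = Y 0 2 + C' * y - k / 2 * φ * y ^ 2 ∧
      Y ![0, 0, 0, t] 3 = X 0 3 + d * t) := by
  obtain ⟨A, B, B', M, hq⟩ := H.exists_uniform_quadratic
  obtain ⟨C, C', d, h⟩ := H.exists_axis_three_affine
  refine ⟨deriv (fun s => X ![0, 0, 0, s] 0) 0, deriv (fun s => Y ![0, 0, 0, s] 0) 0,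
    A, B, B', M, C, C', d, fun y t => ?_⟩
  rw [show (0 : E4) = ![0, 0, 0, 0] from (vec_eta 0).symm]
  refine ⟨⟨?_, ?_, ?_, (h t).1⟩, ?_, ?_, ?_, ?_⟩
  · linear_combination (hq t 0 y).1 + H.apply_zero_add 0 0 0 t
  · linear_combination (hq t 0 y).2.1 + (H.axis_one_two_eq t).1
  · linear_combination (h t).2.1 0 0 y
  · linear_combination (hq t 0 y).2.2.1 + H.swap.apply_zero_add 0 0 0 t
  · linear_combination (hq t 0 y).2.2.2 + (H.swap.axis_one_two_eq t).1
  · linear_combination (h t).2.2 0 0 y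
  · linear_combination (h t).1 - H.axis_three_eq t

theorem eq_zero (H : PolarizedTangent k X Y)
    (hX : ∀ y t, X ![0, 0, y, t] 0 = 0 ∧ X ![0, 0, y, t] 1 = 0 ∧ X ![0, 0, y, t] 2 = 0 ∧
      X ![0, 0, 0, t] 3 = 0)
    (hY : ∀ y t, Y ![0, 0, y, t] 0 = 0 ∧ Y ![0, 0, y, t] 1 = 0 ∧ Y ![0, 0, y, t] 2 = 0) :
    X = 0 := by
  have hX₃ (z₁ z₂ y t : ℂ) : X ![z₁, z₂, y, t] 3 = 0 := by
    rw [H.apply_three, (hX 0 t).2.2.2, (hY 0 t).1, (hY 0 t).2.1, (hY 0 t).2.2]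
    ring
  have hX₂ (z₁ z₂ y t : ℂ) : X ![z₁, z₂, y, t] 2 = 0 := by
    obtain ⟨-, -, C, hC⟩ := H.exists_two_eq t
    linear_combination hC z₁ z₂ y - hC 0 0 y + (hX y t).2.2.1
  have balance (z₁ z₂ y t c : ℂ) : X ![z₁, z₂, y, t] 0 * c + X ![z₁, z₂, y, t] 1 * c ^ 2 = 0 := by
    have hY₃ := H.swap.apply_three 0 0 c (t - k * (z₁ * c + z₂ * c ^ 2))
    obtain ⟨h₀, h₁, h₂⟩ := hY c (t - k * (z₁ * c + z₂ * c ^ 2))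
    apply mul_left_cancel₀ H.ne_zero
    linear_combination -H.tangent_vec (z₁ := z₁) (z₂ := z₂) (y := y) (w := t) (a := 0) (b := 0)
      (c := c) (t := t - k * (z₁ * c + z₂ * c ^ 2)) (by ring) + hX₃ z₁ z₂ y t
      - hY₃ + H.axis_three_eq _ - (hX 0 _).2.2.2 - k * y * h₀ - k * y ^ 2 * h₁
      - k * (z₁ + 2 * c * z₂) * h₂ + k * c * (hX 0 _).1 + k * c ^ 2 * (hX 0 _).2.1
  ext p i
  rw [← vec_eta p]
  have h := balance (p 0) (p 1) (p 2) (p 3)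
  have hX₀ : X ![p 0, p 1, p 2, p 3] 0 = 0 := by linear_combination (h 1 - h (-1)) / 2
  have hX₁ : X ![p 0, p 1, p 2, p 3] 1 = 0 := by linear_combination (h 1 + h (-1)) / 2
  fin_cases i
  exacts [hX₀, hX₁, hX₂ .., hX₃ ..]

end PolarizedTangent

theorem differentiable_polarRho (k : ℂ) :
    Differentiable ℂ fun y : E4 × E4 => polarRho k y.1 y.2 := by
  unfold polarRho
  fun_prop

theorem fderiv_polarRho (k : ℂ) (p q v u : E4) :
    fderiv ℂ (fun y : E4 × E4 => polarRho k y.1 y.2) (p, q) (v, u) = polarRhoDeriv k p q v u := by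
  let θ (s : ℂ) : ℂ := polarRhoDeriv k p q v u - k * s *
    (v 0 * u 2 + v 1 * u 2 * (2 * q 2 + s * u 2) + p 1 * u 2 ^ 2
      + u 0 * v 2 + u 1 * v 2 * (2 * p 2 + s * v 2) + q 1 * v 2 ^ 2)
  have hline (s : ℂ) : polarRho k (p + s • v) (q + s • u) = polarRho k p q + s * θ s := by
    simp only [polarRho, polarRhoDeriv, θ, Pi.add_apply, Pi.smul_apply, smul_eq_mul]
    ring
  have hderiv := (hasDerivAt_id_mul_zero (θ := θ) (by fun_prop)).const_add (polarRho k p q)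
  simp only [← hline] at hderiv
  have hθ : θ 0 = polarRhoDeriv k p q v u := by simp [θ]
  rw [← hθ, ← (differentiable_polarRho k (p, q)).lineDeriv_eq_fderiv]
  exact HasLineDerivAt.lineDeriv hderiv

/-- The projection of `ℂ⁴` onto the space `ℂ³ × ℝ` of the variables `(z₁, z₂, ζ, Re w)`. -/
noncomputable def baseProj : E4 →L[ℝ] ℂ × ℂ × ℂ × ℝ :=
  let π (i : Fin 4) : E4 →L[ℝ] ℂ := ContinuousLinearMap.proj i
  (π 0).prod ((π 1).prod ((π 2).prod (reCLM ∘L π 3)))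

theorem two_I_mul_rho_zero (p : E4) : 2 * I * rho 0 p = polarRho (2 * I) p (star p) := by
  simp only [rho, polarRho]
  apply Complex.ext <;> simp [pow_two] <;> ring

theorem rho_zero_eq (p : E4) : rho 0 p = (polarRho (2 * I) p (star p)).im / 2 := by
  simp [← two_I_mul_rho_zero]

theorem hasFDerivAt_polarRho_star (k : ℂ) (p : E4) :
    HasFDerivAt (fun p : E4 => polarRho k p (star p))
      (((fderiv ℂ (fun y : E4 × E4 => polarRho k y.1 y.2) (p, star p)).restrictScalars ℝ) ∘L
        ((ContinuousLinearMap.id ℝ E4).prod (starL' ℝ : E4 ≃L[ℝ] E4).toContinuousLinearMap)) p :=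
  ((differentiable_polarRho k _).hasFDerivAt.restrictScalars ℝ).comp p
    ((hasFDerivAt_id p).prodMk (starL' ℝ : E4 ≃L[ℝ] E4).hasFDerivAt)

theorem differentiable_rho_zero : Differentiable ℝ (rho 0) := by
  simp only [funext rho_zero_eq]
  intro p
  have := imCLM.differentiableAt.comp p (hasFDerivAt_polarRho_star (2 * I) p).differentiableAt
  simp only [div_eq_mul_inv]
  exact this.mul_const _

theorem two_I_mul_fderiv_rho_zero (p v : E4) :
    2 * I * fderiv ℝ (rho 0) p v = polarRhoDeriv (2 * I) p (star p) v (star v) := by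
  rw [← fderiv_polarRho]
  have h := hasFDerivAt_polarRho_star (2 * I) p
  simp only [← two_I_mul_rho_zero] at h
  have h' := (ofRealCLM.hasFDerivAt.comp p (differentiable_rho_zero p).hasFDerivAt).const_mul
    (2 * I)
  exact congr($(h'.unique h) v)

theorem continuous_fderiv_rho_zero : Continuous fun y : E4 × E4 => fderiv ℝ (rho 0) y.1 y.2 := by
  have him (p v : E4) :
      fderiv ℝ (rho 0) p v = (polarRhoDeriv (2 * I) p (star p) v (star v)).im / 2 := by
    simp [← two_I_mul_fderiv_rho_zero]
  simp only [him, polarRhoDeriv, Pi.star_apply]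
  fun_prop

/-- The entire field `X` is tangent to the model hypersurface `rho 0 = 0`, expressed through the
complexification of that hypersurface. -/
def IsModelTangent (X : E4 → E4) : Prop :=
  PolarizedTangent (2 * I) X fun q => star (X (star q))

/-- A polynomial retraction of `ℂ⁴ × ℂ⁴` onto the complexified model hypersurface
`polarRho (2 * I) p q = 0`, along the direction `∂/∂p₃ - ∂/∂q₃`. -/
noncomputable def modelRetract (y : E4 × E4) : E4 × E4 :=
  let Q := I * (y.1 0 * y.2 2 + y.1 1 * y.2 2 ^ 2 + y.2 0 * y.1 2 + y.2 1 * y.1 2 ^ 2)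
  (![y.1 0, y.1 1, y.1 2, (y.1 3 + y.2 3) / 2 + Q], ![y.2 0, y.2 1, y.2 2, (y.1 3 + y.2 3) / 2 - Q])

theorem differentiable_modelRetract : Differentiable ℂ modelRetract := by
  refine .prodMk (differentiable_pi.2 fun i => ?_) (differentiable_pi.2 fun i => ?_) <;>
    fin_cases i <;> dsimp [modelRetract] <;> fun_prop

theorem polarRho_modelRetract (y : E4 × E4) :
    polarRho (2 * I) (modelRetract y).1 (modelRetract y).2 = 0 := by
  simp only [polarRho, modelRetract, Matrix.cons_val]
  ring

theorem modelRetract_of_polarRho_eq_zero {p q : E4} (h : polarRho (2 * I) p q = 0) :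
    modelRetract (p, q) = (p, q) := by
  simp only [polarRho] at h
  rw [modelRetract, Prod.mk.injEq, ← vec_eta p, ← vec_eta q]
  simp only [Matrix.cons_val, Matrix.vecCons_inj, true_and, and_true]
  exact ⟨by linear_combination -h / 2, by linear_combination h / 2⟩

theorem modelRetract_star (p : E4) :
    modelRetract (p, star p) =
      ((modelRetract (p, star p)).1, star (modelRetract (p, star p)).1) := by
  refine Prod.ext rfl (funext fun i => ?_)
  fin_cases i <;> simp [modelRetract]
  ring

theorem isModelTangent_of_eventually {X : E4 → E4} (hX : Differentiable ℂ X)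
    (h : ∀ᶠ p in 𝓝 0, rho 0 p = 0 → fderiv ℝ (rho 0) p (X p) = 0) : IsModelTangent X := by
  let Y (q : E4) : E4 := star (X (star q))
  have hY : Differentiable ℂ Y := fun q => by
    have := (hX (star q)).star_star
    rwa [star_star] at this
  let Φ (y : E4 × E4) : ℂ := polarRhoDeriv (2 * I) y.1 y.2 (X y.1) (Y y.2)
  have hΦ : Differentiable ℂ (Φ ∘ modelRetract) := by
    refine .comp ?_ differentiable_modelRetract
    simp only [Φ, polarRhoDeriv]
    fun_prop
  have hreal : ∀ᶠ p in 𝓝 0, Φ (modelRetract (p, star p)) = 0 := by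
    have hcont : Continuous fun p : E4 => (modelRetract (p, star p)).1 :=
      (differentiable_modelRetract.continuous.comp (by fun_prop)).fst
    have hzero : (modelRetract ((0 : E4), star 0)).1 = 0 := by
      rw [star_zero, modelRetract_of_polarRho_eq_zero (by simp [polarRho])]
    filter_upwards [hcont.tendsto' 0 0 hzero |>.eventually h] with p hp
    have hrho := polarRho_modelRetract (p, star p)
    rw [modelRetract_star] at hrho ⊢
    set p' := (modelRetract (p, star p)).1
    simp only [Φ, Y, star_star]
    rw [← two_I_mul_fderiv_rho_zero, hp (by rw [rho_zero_eq, hrho]; simp)]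
    simp
  refine ⟨by simp, hX, hY, fun p q hpq => ?_⟩
  have := congrFun (eq_zero_of_eventually_apply_star_eq_zero hΦ hreal) (p, q)
  rwa [Function.comp_apply, modelRetract_of_polarRho_eq_zero hpq] at this

theorem star_vec (y t : ℂ) : star (![0, 0, y, t] : E4) = ![0, 0, conj y, conj t] := by
  ext i; fin_cases i <;> simp

theorem IsModelTangent.exists_normal_form {X : E4 → E4} (H : IsModelTangent X) :
    ∃ φ A B M C d : ℂ, (X 0 3).im = 0 ∧ A.re = 0 ∧ M.re = 0 ∧ d.im = 0 ∧ ∀ y t,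
      X ![0, 0, y, t] 0 = X 0 0 + φ * t + A * y - conj B * y ^ 2 ∧
      X ![0, 0, y, t] 1 = X 0 1 + B * y + M * y ^ 2 ∧
      X ![0, 0, y, t] 2 = X 0 2 + C * y + I * conj φ * y ^ 2 ∧
      X ![0, 0, 0, t] 3 = X 0 3 + d * t := by
  obtain ⟨φ, φ', A, B, B', M, C, C', d, h⟩ := PolarizedTangent.exists_normal_form H
  simp only [star_vec, Pi.star_apply, star_zero, star_def] at h
  have h₀ (y t : ℂ) : conj φ * t + conj A * y - conj B' * y ^ 2 = φ' * t - A * y - B * y ^ 2 := by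
    have := (h y t).2.1
    rw [(h (conj y) (conj t)).1.1] at this
    simp only [map_add, map_sub, map_mul, map_pow, conj_conj] at this
    linear_combination this
  have h₁ (y : ℂ) : conj B * y + conj M * y ^ 2 = B' * y - M * y ^ 2 := by
    have := (h y 0).2.2.1
    rw [map_zero, (h (conj y) 0).1.2.1] at this
    simp only [map_add, map_mul, map_pow, conj_conj] at this
    linear_combination this
  have h₃ (t : ℂ) : conj (X 0 3) + conj d * t = X 0 3 + d * t := by
    have := (h 0 t).2.2.2.2
    rw [map_zero, (h 0 (conj t)).1.2.2.2] at this
    simpa only [map_add, map_mul, conj_conj] using this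
  have hφ : φ' = conj φ := by linear_combination -h₀ 0 1
  have hB : B' = conj B := by linear_combination (h₁ (-1) - h₁ 1) / 2
  have hA : conj A = -A := by linear_combination (h₀ 1 0 - h₀ (-1) 0) / 2
  have hM : conj M = -M := by linear_combination (h₁ (-1) + h₁ 1) / 2
  have hX : conj (X 0 3) = X 0 3 := by linear_combination h₃ 0
  have hd : conj d = d := by linear_combination h₃ 1 - h₃ 0
  have re_eq_zero {z : ℂ} (hz : conj z = -z) : z.re = 0 :=
    self_eq_neg.1 (by simpa using congrArg re hz)
  refine ⟨φ, A, B, M, C, d, conj_eq_iff_im.1 hX, re_eq_zero hA, re_eq_zero hM,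
    conj_eq_iff_im.1 hd, fun y t => ?_⟩
  simpa only [hφ, hB, mul_div_cancel_left₀ I two_ne_zero] using (h y t).1

theorem IsModelTangent.eq_zero {X : E4 → E4} (H : IsModelTangent X)
    (h : ∀ y t, X ![0, 0, y, t] 0 = 0 ∧ X ![0, 0, y, t] 1 = 0 ∧ X ![0, 0, y, t] 2 = 0 ∧
      X ![0, 0, 0, t] 3 = 0) : X = 0 := by
  refine PolarizedTangent.eq_zero H h fun y t => ?_
  simp [star_vec, h (conj y) (conj t)]

/-- The weights `[z₁] = 2`, `[z₂] = [ζ] = 1`, `[w] = 3` of the coordinates of `ℂ⁴`. -/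
def weight : Fin 4 → ℕ := ![2, 1, 1, 3]

/-- The weighted dilation of `ℂ⁴`. -/
def dilate (t : ℂ) (p : E4) : E4 := fun i => t ^ weight i * p i

/-- The pullback of the field `X` by the dilation `dilate t`, multiplied by `t ^ 3` to make it
regular at `t = 0`, as a function of the pair `(t, p)`. -/
def rescale (X : E4 → E4) (y : ℂ × E4) : E4 := fun i => y.1 ^ (3 - weight i) * X (dilate y.1 y.2) i

/-- The component of weighted degree `n` of the field `X`, where `∂/∂w` has degree `0`,
`∂/∂z₁` degree `1` and `∂/∂z₂`, `∂/∂ζ` degree `2`. -/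
noncomputable def weightedPart (n : ℕ) (X : E4 → E4) : E4 → E4 := taylorCoeff ℂ n (rescale X)

/-- The field `Z` is homogeneous of weighted degree `n`. -/
def IsWeightedHomogeneous (n : ℕ) (Z : E4 → E4) : Prop :=
  ∀ c ≠ 0, ∀ p i, c ^ (3 - weight i) * Z (dilate c p) i = c ^ n * Z p i

theorem analyticAt_dilate (y : ℂ × E4) : AnalyticAt ℂ (fun y : ℂ × E4 => dilate y.1 y.2) y := by
  refine analyticAt_pi_iff.2 fun i => (analyticAt_fst.pow _).mul ?_
  exact analyticAt_pi_iff.1 analyticAt_snd i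

theorem dilate_zero (p : E4) : dilate 0 p = 0 := by
  ext i; fin_cases i <;> simp [dilate, weight]

theorem dilate_dilate (s t : ℂ) (p : E4) : dilate s (dilate t p) = dilate (s * t) p := by
  ext i; simp [dilate, mul_pow, mul_assoc]

theorem analyticAt_rescale {X : E4 → E4} {t : ℂ} {p : E4} (hX : AnalyticAt ℂ X (dilate t p)) :
    AnalyticAt ℂ (rescale X) (t, p) := by
  refine analyticAt_pi_iff.2 fun i => (analyticAt_fst.pow _).mul ?_
  exact analyticAt_pi_iff.1 (hX.comp_of_eq (analyticAt_dilate (t, p)) rfl) i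

theorem differentiable_weightedPart {X : E4 → E4} (hX : AnalyticAt ℂ X 0) (n : ℕ) :
    Differentiable ℂ (weightedPart n X) := fun p =>
  (analyticAt_taylorCoeff (analyticAt_rescale (by rwa [dilate_zero])) n).differentiableAt

theorem isWeightedHomogeneous_weightedPart {X : E4 → E4} (hX : AnalyticAt ℂ X 0) {n : ℕ}
    (h : ∀ j < n, weightedPart j X = 0) : IsWeightedHomogeneous n (weightedPart n X) := by
  intro c hc p i
  have hlow (p : E4) (j : ℕ) (hj : j < n) : ∀ᶠ x in 𝓝 p, taylorCoeff ℂ j (rescale X) x = 0 :=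
    .of_forall (congrFun (h j hj))
  have han (p : E4) : AnalyticAt ℂ (rescale X) (0, p) := analyticAt_rescale (by rwa [dilate_zero])
  have hscale : Tendsto (fun s : ℂ => s * c) (𝓝[≠] 0) (𝓝[≠] 0) := by
    simpa using (hasDerivAt_mul_const (x := 0) c).tendsto_nhdsNE hc
  have hleft := ((tendsto_inv_pow_smul (han _) (hlow (dilate c p)) tendsto_id
    tendsto_const_nhds).apply_nhds i).const_mul (c ^ (3 - weight i))
  have hright := ((tendsto_inv_pow_smul (han p) (hlow p) hscale
    tendsto_const_nhds).apply_nhds i).const_mul (c ^ n)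
  refine tendsto_nhds_unique hleft (hright.congr' ?_)
  filter_upwards [eventually_mem_nhdsWithin] with s (hs : s ≠ 0)
  simp only [Pi.smul_apply, smul_eq_mul, rescale, dilate_dilate, mul_pow, mul_inv, id_eq]
  field_simp

/-- The value at the origin, without the imaginary part of its `w`-entry, of the field with
components `Z n` of weighted degree `n`. -/
def valueJet : (ℕ → E4 → E4) →ₗ[ℝ] ℝ × ℂ × ℂ × ℂ where
  toFun Z := ((Z 0 0 3).re, Z 1 0 0, Z 2 0 1, Z 2 0 2)
  map_add' _ _ := by simp
  map_smul' _ _ := by simp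

theorem valueJet_eq_zero {Z : ℕ → E4 → E4} (h : ∀ n, Z n 0 = 0) : valueJet Z = 0 := by
  simp [valueJet, h]

/-- The data of the components `Z n`, of weighted degree `n`, of a field that determine a tangent
field vanishing at the origin: the parameters left free by the normal form of a homogeneous field
tangent to the model. -/
def derivJet : (ℕ → E4 → E4) →ₗ[ℝ] ℝ × ℂ × ℂ × ℝ × ℝ × ℂ where
  toFun Z := ((Z 2 ![0, 0, 1, 0] 0).im, Z 3 ![0, 0, 1, 0] 1, Z 3 ![0, 0, 1, 0] 2,
    (Z 3 ![0, 0, 0, 1] 3).re, (Z 4 ![0, 0, 1, 0] 1).im, Z 4 ![0, 0, 0, 1] 0)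
  map_add' _ _ := by simp
  map_smul' _ _ := by simp

theorem eq_zero_of_two_pow_mul_eq {a n : ℕ} {x : ℂ} (h : 2 ^ a * x = 2 ^ n * x) (hne : n ≠ a) :
    x = 0 := by
  by_contra hx
  have : (2 : ℂ) ^ a = 2 ^ n := mul_right_cancel₀ hx h
  exact hne (Nat.pow_right_injective le_rfl (by exact_mod_cast this.symm))

theorem dilate_vec (c y t : ℂ) : dilate c ![0, 0, y, t] = ![0, 0, c * y, c ^ 3 * t] := by
  ext i; fin_cases i <;> simp [dilate, weight]

theorem IsModelTangent.exists_homogeneous_normal_form {X : E4 → E4} (H : IsModelTangent X) {n : ℕ}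
    (hom : IsWeightedHomogeneous n X) : ∃ φ A B M C d : ℂ,
      ((X 0 3).im = 0 ∧ A.re = 0 ∧ M.re = 0 ∧ d.im = 0) ∧
      ((n ≠ 1 → X 0 0 = 0) ∧ (n ≠ 2 → X 0 1 = 0) ∧ (n ≠ 2 → X 0 2 = 0) ∧ (n ≠ 0 → X 0 3 = 0)) ∧
      ((n ≠ 4 → φ = 0) ∧ (n ≠ 2 → A = 0) ∧ (n ≠ 3 → B = 0) ∧ (n ≠ 4 → M = 0) ∧
        (n ≠ 3 → C = 0) ∧ (n ≠ 3 → d = 0)) ∧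
      ∀ y t, X ![0, 0, y, t] 0 = X 0 0 + φ * t + A * y - conj B * y ^ 2 ∧
        X ![0, 0, y, t] 1 = X 0 1 + B * y + M * y ^ 2 ∧
        X ![0, 0, y, t] 2 = X 0 2 + C * y + I * conj φ * y ^ 2 ∧
        X ![0, 0, 0, t] 3 = X 0 3 + d * t := by
  obtain ⟨φ, A, B, M, C, d, hX, hA, hM, hd, h⟩ := H.exists_normal_form
  have h₃ (t : ℂ) := (h 0 t).2.2.2
  have hom (y t : ℂ) (i : Fin 4) := hom 2 two_ne_zero ![0, 0, y, t] i
  simp only [dilate_vec] at hom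
  have e₀ (y t : ℂ) := hom y t 0
  have e₁ (y : ℂ) := hom y 0 1
  have e₂ (y : ℂ) := hom y 0 2
  have e₃ (t : ℂ) := hom 0 t 3
  simp only [h, h₃, mul_zero, weight, Matrix.cons_val] at e₀ e₁ e₂ e₃
  norm_num at e₀ e₁ e₂ e₃
  refine ⟨φ, A, B, M, C, d, ⟨hX, hA, hM, hd⟩, ⟨?_, ?_, ?_, ?_⟩, ⟨?_, ?_, ?_, ?_, ?_, ?_⟩, h⟩ <;>
    apply eq_zero_of_two_pow_mul_eq
  · linear_combination e₀ 0 0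
  · linear_combination e₁ 0
  · linear_combination e₂ 0
  · linear_combination e₃ 0
  · linear_combination e₀ 0 1 - e₀ 0 0
  · linear_combination (e₀ 1 0 - e₀ (-1) 0) / 2
  · linear_combination (e₁ 1 - e₁ (-1)) / 2
  · linear_combination (e₁ 1 + e₁ (-1)) / 2 - e₁ 0
  · linear_combination (e₂ 1 - e₂ (-1)) / 2
  · linear_combination e₃ 1 - e₃ 0

theorem IsModelTangent.eq_zero_of_jet_eq_zero {Z : ℕ → E4 → E4} {n : ℕ}
    (H : IsModelTangent (Z n)) (hom : IsWeightedHomogeneous n (Z n)) (h₀ : valueJet Z = 0)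
    (h₁ : derivJet Z = 0) : Z n = 0 := by
  obtain ⟨φ, A, B, M, C, d, hre, hvalue, hcoeff, h⟩ := H.exists_homogeneous_normal_form hom
  have h₃ (t : ℂ) := (h 0 t).2.2.2
  simp only [valueJet, derivJet, LinearMap.coe_mk, AddHom.coe_mk, Prod.mk_eq_zero] at h₀ h₁
  suffices (Z n 0 0 = 0 ∧ Z n 0 1 = 0 ∧ Z n 0 2 = 0 ∧ Z n 0 3 = 0) ∧
      φ = 0 ∧ A = 0 ∧ B = 0 ∧ M = 0 ∧ C = 0 ∧ d = 0 by
    obtain ⟨⟨r₀, r₁, r₂, r₃⟩, rfl, rfl, rfl, rfl, rfl, rfl⟩ := this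
    exact H.eq_zero (by simpa [r₀, r₁, r₂, r₃] using h)
  clear H hom
  match n with
  | 0 | 1 | 2 | 3 | 4 => simp_all [Complex.ext_iff]
  | n + 5 => simp_all

/-- The weighted dilation of the space `ℂ³ × ℝ` of the variables `(z₁, z₂, ζ, Re w)`. -/
noncomputable def baseDilate (t : ℝ) (x : ℂ × ℂ × ℂ × ℝ) : ℂ × ℂ × ℂ × ℝ :=
  ((t : ℂ) ^ 2 * x.1, (t : ℂ) * x.2.1, (t : ℂ) * x.2.2.1, t ^ 3 * x.2.2.2)

/-- The pullback of `F` by the weighted dilation, as a function of the pair `(t, x)`. -/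
noncomputable def baseRescale (F : ℂ × ℂ × ℂ × ℝ → ℝ) (y : ℝ × ℂ × ℂ × ℂ × ℝ) : ℝ :=
  F (baseDilate y.1 y.2)

section Rescaling

variable {F : ℂ × ℂ × ℂ × ℝ → ℝ} {X : E4 → E4} {n : ℕ}

theorem baseDilate_zero (x : ℂ × ℂ × ℂ × ℝ) : baseDilate 0 x = 0 := by simp [baseDilate]

theorem baseProj_dilate (t : ℝ) (p : E4) : baseProj (dilate t p) = baseDilate t (baseProj p) := by
  simp [baseProj, dilate, baseDilate, weight, ← ofReal_pow]

theorem analyticAt_baseRescale {y : ℝ × ℂ × ℂ × ℂ × ℝ} (hF : AnalyticAt ℝ F (baseDilate y.1 y.2)) :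
    AnalyticAt ℝ (baseRescale F) y := by
  have hdil : ContDiff ℝ ⊤ fun y : ℝ × ℂ × ℂ × ℂ × ℝ => baseDilate y.1 y.2 := by
    have : ContDiff ℝ ⊤ ((↑) : ℝ → ℂ) := ofRealCLM.contDiff
    unfold baseDilate
    fun_prop
  exact AnalyticAt.comp (g := F) hF (contDiff_omega_iff_analyticOnNhd.1 hdil y trivial)

theorem rho_dilate (F : ℂ × ℂ × ℂ × ℝ → ℝ) (t : ℝ) (p : E4) :
    rho F (dilate t p) = t ^ 3 * rho 0 p - baseRescale F (t, baseProj p) := by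
  have h₀ : dilate t p 0 * conj (dilate t p 2) = (t ^ 3 : ℝ) * (p 0 * conj (p 2)) := by
    simp only [dilate, weight, Matrix.cons_val, map_mul, map_pow, conj_ofReal, ofReal_pow]
    ring
  have h₁ : dilate t p 1 * conj (dilate t p 2) ^ 2 = (t ^ 3 : ℝ) * (p 1 * conj (p 2) ^ 2) := by
    simp only [dilate, weight, Matrix.cons_val, map_mul, map_pow, conj_ofReal, ofReal_pow]
    ring
  have h₃ : dilate t p 3 = (t ^ 3 : ℝ) * p 3 := by simp [dilate, weight]
  have hF : F (dilate t p 0, dilate t p 1, dilate t p 2, (dilate t p 3).re) =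
      baseRescale F (t, baseProj p) := by
    rw [baseRescale, ← baseProj_dilate]
    rfl
  rw [rho, hF, h₀, h₁, h₃, rho]
  simp only [re_ofReal_mul, im_ofReal_mul, Pi.zero_apply]
  ring

theorem differentiableAt_rho {p : E4} (hF : DifferentiableAt ℝ F (baseProj p)) :
    DifferentiableAt ℝ (rho F) p := by
  have hrho : rho F = rho 0 - F ∘ baseProj := by
    ext p
    simp [rho, baseProj]
  rw [hrho]
  exact (differentiable_rho_zero p).sub (hF.comp p baseProj.differentiableAt)

theorem dilate_smul (c t : ℂ) (p : E4) : dilate t (c • p) = c • dilate t p := by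
  ext i
  simp [dilate, mul_left_comm]

theorem dilate_rescale (X : E4 → E4) (t : ℂ) (p : E4) :
    dilate t (rescale X (t, p)) = t ^ 3 • X (dilate t p) := by
  ext i
  fin_cases i <;> simp [dilate, rescale, weight] <;> ring

theorem fderiv_rho_dilate {t : ℝ} {p : E4} (hF : AnalyticAt ℝ F (baseDilate t (baseProj p)))
    (v : E4) : fderiv ℝ (rho F) (dilate t p) (dilate t v) =
      t ^ 3 * fderiv ℝ (rho 0) p v - fderiv ℝ (baseRescale F) (t, baseProj p) (0, baseProj v) := by
  have hline (s : ℝ) : dilate t p + s • dilate t v = dilate t (p + s • v) := by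
    ext i
    simp only [Pi.add_apply, dilate, Pi.smul_apply, real_smul]
    ring
  have hF' : DifferentiableAt ℝ F (baseProj (dilate t p)) := by
    rw [baseProj_dilate]
    exact hF.differentiableAt
  have hleft := (differentiableAt_rho hF').hasFDerivAt.hasLineDerivAt (dilate t v)
  have hmodel := (differentiable_rho_zero p).hasFDerivAt.hasLineDerivAt v
  have hbase := (analyticAt_baseRescale (y := (t, baseProj p))
    hF).differentiableAt.hasFDerivAt.hasLineDerivAt (0, baseProj v)
  simp only [HasLineDerivAt, hline, rho_dilate, map_add, map_smul] at hleft hmodel hbase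
  simp only [Prod.smul_mk, smul_zero, Prod.mk_add_mk, add_zero] at hbase
  exact hleft.unique ((hmodel.const_mul (t ^ 3)).sub hbase)

/-- The point of `{rho F = 0}`, dilated by `t⁻¹`, that lies over the point `baseProj p` of the
base when `p` lies on the model hypersurface. -/
noncomputable def perturbPoint (F : ℂ × ℂ × ℂ × ℝ → ℝ) (p : E4) (t : ℝ) : E4 :=
  p + Pi.single 3 (↑((t ^ 3)⁻¹ * baseRescale F (t, baseProj p)) * I)

theorem baseProj_perturbPoint (F : ℂ × ℂ × ℂ × ℝ → ℝ) (p : E4) (t : ℝ) :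
    baseProj (perturbPoint F p t) = baseProj p := by
  simp [perturbPoint, baseProj, -ofReal_mul]

theorem rho_dilate_perturbPoint {p : E4} (hp : rho 0 p = 0) {t : ℝ} (ht : t ≠ 0) :
    rho F (dilate t (perturbPoint F p t)) = 0 := by
  have hrho : rho 0 (perturbPoint F p t) = (t ^ 3)⁻¹ * baseRescale F (t, baseProj p) := by
    rw [← sub_zero (rho 0 _), ← hp]
    simp [rho, perturbPoint, -ofReal_mul]
  rw [rho_dilate, hrho, baseProj_perturbPoint, mul_inv_cancel_left₀ (pow_ne_zero 3 ht), sub_self]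

theorem tendsto_perturbPoint (hF : AnalyticAt ℝ F 0) {p : E4}
    (hG : ∀ j ≤ 3, ∀ᶠ x in 𝓝 (baseProj p), taylorCoeff ℝ j (baseRescale F) x = 0) :
    Tendsto (perturbPoint F p) (𝓝[≠] 0) (𝓝 p) := by
  have hlim := tendsto_inv_pow_smul (analyticAt_baseRescale (y := (0, baseProj p))
    (by rwa [baseDilate_zero])) (fun j hj => hG j hj.le) tendsto_id tendsto_const_nhds
  rw [(hG 3 le_rfl).self_of_nhds] at hlim
  have hcont : Continuous fun s : ℝ => p + Pi.single 3 (↑s * I) :=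
    continuous_const.add ((continuous_single 3).comp (by fun_prop))
  have := (hcont.tendsto 0).comp hlim
  rwa [ofReal_zero, zero_mul, Pi.single_zero, add_zero] at this

theorem fderiv_rho_zero_weightedPart_eq_zero (hF : AnalyticAt ℝ F 0) (hX : AnalyticAt ℂ X 0)
    (htan : ∀ᶠ q in 𝓝 0, rho F q = 0 → fderiv ℝ (rho F) q (X q) = 0)
    (hlow : ∀ j < n, weightedPart j X = 0) {p : E4} (hp : rho 0 p = 0)
    (hG : ∀ j ≤ 3, ∀ᶠ x in 𝓝 (baseProj p), taylorCoeff ℝ j (baseRescale F) x = 0) :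
    fderiv ℝ (rho 0) p (weightedPart n X p) = 0 := by
  have hpt := tendsto_perturbPoint hF hG
  have ht : Tendsto ((↑) : ℝ → ℂ) (𝓝[≠] 0) (𝓝 0) :=
    tendsto_ofReal_nhdsNE_zero.mono_right nhdsWithin_le_nhds
  set Y : ℝ → E4 := fun t => ((t : ℂ) ^ n)⁻¹ • rescale X (t, perturbPoint F p t) with hYdef
  have hY : Tendsto Y (𝓝[≠] 0) (𝓝 (weightedPart n X p)) :=
    tendsto_inv_pow_smul (analyticAt_rescale (by rwa [dilate_zero]))
      (fun j hj => .of_forall (congrFun (hlow j hj))) tendsto_ofReal_nhdsNE_zero hpt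
  have hmodel := (continuous_fderiv_rho_zero.tendsto (p, weightedPart n X p)).comp
    (hpt.prodMk_nhds hY)
  have herror := tendsto_inv_pow_smul_fderiv (analyticAt_baseRescale (by rwa [baseDilate_zero]))
    hG (tendsto_id (x := 𝓝[≠] (0 : ℝ))) tendsto_const_nhds ((baseProj.continuous.tendsto _).comp hY)
  refine tendsto_nhds_unique hmodel (herror.congr' ?_)
  have hsmall : Tendsto (fun t : ℝ => dilate t (perturbPoint F p t)) (𝓝[≠] 0) (𝓝 0) := by
    simpa [Function.comp_def, dilate_zero] using
      (analyticAt_dilate (0, p)).continuousAt.tendsto.comp (ht.prodMk_nhds hpt)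
  have hbase : Tendsto (fun t : ℝ => baseDilate t (baseProj p)) (𝓝[≠] 0) (𝓝 0) := by
    simpa only [Function.comp_def, baseProj_dilate, baseProj_perturbPoint, map_zero] using
      (baseProj.continuous.tendsto 0).comp hsmall
  filter_upwards [hsmall.eventually htan, hbase.eventually hF.eventually_analyticAt,
    eventually_mem_nhdsWithin] with t htan hF (ht : t ≠ 0)
  have hdil : dilate t (Y t) = ((t ^ n)⁻¹ * t ^ 3) • X (dilate t (perturbPoint F p t)) := by
    rw [← coe_smul, hYdef, dilate_smul, dilate_rescale, smul_smul]
    push_cast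
    rfl
  have key := fderiv_rho_dilate (p := perturbPoint F p t) (by rwa [baseProj_perturbPoint]) (Y t)
  rw [hdil, map_smul, htan (rho_dilate_perturbPoint hp ht), smul_zero, baseProj_perturbPoint,
    eq_comm, sub_eq_zero] at key
  simp only [id_eq, smul_eq_mul, Function.comp_apply, ← key,
    inv_mul_cancel_left₀ (pow_ne_zero 3 ht)]

end Rescaling

theorem norm_dilate_le {t : ℂ} (ht : ‖t‖ ≤ 1) (p : E4) : ‖dilate t p‖ ≤ ‖p‖ := by
  refine pi_norm_le_iff_of_nonneg (norm_nonneg p) |>.2 fun i => ?_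
  rw [dilate, norm_mul, norm_pow]
  exact (mul_le_of_le_one_left (norm_nonneg _) (pow_le_one₀ (norm_nonneg t) ht)).trans
    (norm_le_pi_norm p i)

theorem rescale_one (X : E4 → E4) (p : E4) : rescale X (1, p) = X p := by
  have : dilate 1 p = p := funext fun i => by simp [dilate]
  exact funext fun i => by simp [rescale, this]

theorem eventuallyEq_zero_of_weightedPart_eq_zero {X : E4 → E4} (hX : AnalyticAt ℂ X 0)
    (h : ∀ n, weightedPart n X = 0) : X =ᶠ[𝓝 0] 0 := by
  obtain ⟨r, hr, hball⟩ := Metric.eventually_nhds_iff_ball.1 hX.eventually_analyticAt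
  filter_upwards [Metric.ball_mem_nhds 0 hr] with p hp
  have han : AnalyticOnNhd ℂ (fun t => rescale X (t, p)) (Metric.closedBall 0 1) := fun t ht => by
    refine (analyticAt_rescale (hball _ ?_)).comp₂ analyticAt_id analyticAt_const
    rw [mem_ball_zero_iff] at hp ⊢
    exact (norm_dilate_le (by simpa using ht) p).trans_lt hp
  have hzero : ∀ᶠ t in 𝓝 0, rescale X (t, p) = 0 :=
    eventually_eq_zero_of_taylorCoeff_eq_zero (analyticAt_rescale (by rwa [dilate_zero]))
      fun n => .of_forall (congrFun (h n))
  have := han.eqOn_zero_of_preconnected_of_eventuallyEq_zero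
    (convex_closedBall (0 : ℂ) 1).isPreconnected (Metric.mem_closedBall_self zero_le_one) hzero
    (by simp : (1 : ℂ) ∈ Metric.closedBall 0 1)
  simpa only [rescale_one, Pi.zero_apply] using this

section Tangent

variable {F : ℂ × ℂ × ℂ × ℝ → ℝ} {X : E4 → E4}

theorem isModelTangent_weightedPart (hF : AnalyticAt ℝ F 0)
    (hG : ∀ j ≤ 3, ∀ᶠ x in 𝓝 0, taylorCoeff ℝ j (baseRescale F) x = 0) (hX : AnalyticAt ℂ X 0)
    (htan : ∀ᶠ q in 𝓝 0, rho F q = 0 → fderiv ℝ (rho F) q (X q) = 0) {n : ℕ}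
    (hlow : ∀ j < n, weightedPart j X = 0) : IsModelTangent (weightedPart n X) := by
  refine isModelTangent_of_eventually (differentiable_weightedPart hX n) ?_
  have hnear : ∀ᶠ x in 𝓝 0, ∀ j ≤ 3, ∀ᶠ x in 𝓝 x, taylorCoeff ℝ j (baseRescale F) x = 0 :=
    (Set.finite_Iic 3).eventually_all.2 fun j hj => (hG j hj).eventually_nhds
  filter_upwards [baseProj.continuous.tendsto' 0 0 (map_zero _) |>.eventually hnear] with p hp h₀
  exact fderiv_rho_zero_weightedPart_eq_zero hF hX htan hlow h₀ hp

theorem eventuallyEq_zero_of_jet_eq_zero (hF : AnalyticAt ℝ F 0)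
    (hG : ∀ j ≤ 3, ∀ᶠ x in 𝓝 0, taylorCoeff ℝ j (baseRescale F) x = 0) (hX : AnalyticAt ℂ X 0)
    (htan : ∀ᶠ q in 𝓝 0, rho F q = 0 → fderiv ℝ (rho F) q (X q) = 0)
    (h₀ : valueJet (weightedPart · X) = 0) (h₁ : derivJet (weightedPart · X) = 0) :
    X =ᶠ[𝓝 0] 0 := by
  refine eventuallyEq_zero_of_weightedPart_eq_zero hX fun n => ?_
  induction n using Nat.strong_induction_on with
  | _ n ih =>
    exact IsModelTangent.eq_zero_of_jet_eq_zero (isModelTangent_weightedPart hF hG hX htan ih)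
      (isWeightedHomogeneous_weightedPart hX ih) h₀ h₁

end Tangent

theorem rank_le_of_le_map.{u} {K M : Type*} {N V : Type u} [DivisionRing K] [AddCommGroup M]
    [Module K M] [AddCommGroup N] [Module K N] [AddCommGroup V] [Module K V] (g : M →ₗ[K] N)
    {T : Submodule K M} {W : Submodule K N} (hW : W ≤ T.map g) (L : T →ₗ[K] V)
    (hker : ∀ x, L x = 0 → g x = 0) : Module.rank K W ≤ Module.rank K V := by
  obtain ⟨s, hs⟩ := (g.submoduleMap T).exists_rightInverse_of_surjective
    (LinearMap.range_eq_top.2 (g.submoduleMap_surjective T))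
  have hsection (w : T.map g) : g (s w) = w := congr(($hs w : N))
  have hinj : Function.Injective (L ∘ₗ s) := LinearMap.ker_eq_bot.1 <|
    LinearMap.ker_eq_bot'.2 fun w hw => Subtype.ext <| (hsection w).symm.trans (hker _ hw)
  exact (Submodule.rank_mono hW).trans (LinearMap.rank_le_of_injective _ hinj)

theorem weightedPart_add {X Y : E4 → E4} (hX : AnalyticAt ℂ X 0) (hY : AnalyticAt ℂ Y 0) (n : ℕ) :
    weightedPart n (X + Y) = weightedPart n X + weightedPart n Y := by
  have hadd : rescale (X + Y) = rescale X + rescale Y := by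
    ext y i
    simp [rescale, mul_add]
  ext1 p
  rw [weightedPart, hadd]
  exact taylorCoeff_add (analyticAt_rescale (by rwa [dilate_zero]))
    (analyticAt_rescale (by rwa [dilate_zero])) n

theorem weightedPart_smul (c : ℝ) (X : E4 → E4) (n : ℕ) :
    weightedPart n (c • X) = c • weightedPart n X := by
  have hsmul : rescale (c • X) = (c : ℂ) • rescale X := by
    ext y i
    simp [rescale, mul_left_comm]
  rw [weightedPart, hsmul, taylorCoeff_smul]
  rfl

theorem weightedPart_apply_zero {X : E4 → E4} (hX : AnalyticAt ℂ X 0) (h : X 0 = 0) (n : ℕ) :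
    weightedPart n X 0 = 0 := by
  refine taylorCoeff_eq_zero_of_eventually_eq_zero (analyticAt_rescale (by rwa [dilate_zero]))
    (.of_forall fun t => ?_) n
  have : dilate t 0 = 0 := funext fun i => mul_zero _
  ext i
  simp [rescale, this, h]

/-- The real vector space of the fields on `ℂ⁴` that are holomorphic at `0` and, near `0`, tangent
to `Γ`. -/
def tangentFields (F : ℂ × ℂ × ℂ × ℝ → ℝ) : Submodule ℝ (E4 → E4) where
  carrier := {X | AnalyticAt ℂ X 0 ∧ ∀ᶠ p in 𝓝 0, rho F p = 0 → fderiv ℝ (rho F) p (X p) = 0}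
  zero_mem' := ⟨analyticAt_const, .of_forall fun _ _ => map_zero _⟩
  add_mem' := by
    rintro X Y ⟨hX, hX'⟩ ⟨hY, hY'⟩
    refine ⟨hX.add hY, ?_⟩
    filter_upwards [hX', hY'] with p hX hY hp
    rw [Pi.add_apply, map_add, hX hp, hY hp, add_zero]
  smul_mem' := by
    rintro c X ⟨hX, hX'⟩
    refine ⟨hX.const_smul, hX'.mono fun p hX hp => ?_⟩
    rw [Pi.smul_apply, map_smul, hX hp, smul_zero]

/-- The components of all weighted degrees of a tangent field. -/
noncomputable def weightedParts (F : ℂ × ℂ × ℂ × ℝ → ℝ) : tangentFields F →ₗ[ℝ] ℕ → E4 → E4 where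
  toFun X n := weightedPart n X
  map_add' X Y := funext (weightedPart_add X.2.1 Y.2.1)
  map_smul' c X := funext (weightedPart_smul c X)

/-- The germs at `0` of the components of a field on `ℂ⁴`. -/
noncomputable def fieldGerm : (E4 → E4) →ₗ[ℝ] G4 × G4 × G4 × G4 where
  toFun X := (↑fun p => X p 0, ↑fun p => X p 1, ↑fun p => X p 2, ↑fun p => X p 3)
  map_add' _ _ := rfl
  map_smul' _ _ := rfl

theorem fieldGerm_eq_zero {X : E4 → E4} (h : X =ᶠ[𝓝 0] 0) : fieldGerm X = 0 :=
  Prod.ext (Germ.coe_eq.2 (h.fun_comp (· 0))) <| Prod.ext (Germ.coe_eq.2 (h.fun_comp (· 1))) <|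
    Prod.ext (Germ.coe_eq.2 (h.fun_comp (· 2))) (Germ.coe_eq.2 (h.fun_comp (· 3)))

theorem analyticAt_vec {f g h e : E4 → ℂ} {p : E4} (hf : AnalyticAt ℂ f p) (hg : AnalyticAt ℂ g p)
    (hh : AnalyticAt ℂ h p) (he : AnalyticAt ℂ e p) :
    AnalyticAt ℂ (fun q => ![f q, g q, h q, e q]) p := by
  refine analyticAt_pi_iff.2 fun i => ?_
  fin_cases i <;> assumption

theorem tangentGerms_subset (F : ℂ × ℂ × ℂ × ℝ → ℝ) :
    tangentGerms F ⊆ (tangentFields F).map fieldGerm := by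
  rintro _ ⟨f, g, h, e, rfl, hf, hg, hh, he, htan⟩
  exact ⟨fun p => ![f p, g p, h p, e p], ⟨analyticAt_vec hf hg hh he, htan⟩, rfl⟩

theorem tangentGerms0_subset (F : ℂ × ℂ × ℂ × ℝ → ℝ) :
    tangentGerms0 F ⊆ (tangentFields F ⊓ (LinearMap.proj 0).ker).map fieldGerm := by
  rintro _ ⟨f, g, h, e, rfl, hf₀, hg₀, hh₀, he₀, hf, hg, hh, he, htan⟩
  refine ⟨fun p => ![f p, g p, h p, e p], ⟨⟨analyticAt_vec hf hg hh he, htan⟩, ?_⟩, rfl⟩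
  ext i
  fin_cases i <;> assumption

theorem taylorCoeff_baseRescale_eventually_eq_zero {F : ℂ × ℂ × ℂ × ℝ → ℝ} (hF : AnalyticAt ℝ F 0)
    (hF4 : ∀ᶠ x in 𝓝 0, Tendsto (fun t => F (baseDilate t x) / t ^ 3) (𝓝[≠] 0) (𝓝 0)) {j : ℕ}
    (hj : j ≤ 3) : ∀ᶠ x in 𝓝 0, taylorCoeff ℝ j (baseRescale F) x = 0 := by
  refine taylorCoeff_eventually_eq_zero (analyticAt_baseRescale (by rwa [baseDilate_zero])) ?_ hj
  simpa only [baseRescale, smul_eq_mul, inv_mul_eq_div] using hF4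

/-- For any real-analytic perturbation `F` of weighted order ≥ 4 (weights
`[z₁] = 2, [z₂] = [ζ] = 1, [u] = 3`), the space of germs of holomorphic 4-tuples
tangent to `Γ = {Im w = 2 Re (z₁ ζ̄) + 2 Re (z₂ ζ̄²) + F}` has real dimension at most 16,
and its subspace of tuples vanishing at `0` has dimension at most 9. -/
theorem stmt_11 (F : ℂ × ℂ × ℂ × ℝ → ℝ) (hF : AnalyticAt ℝ F 0)
    (hF4 : ∀ᶠ x : ℂ × ℂ × ℂ × ℝ in 𝓝 0,
      Tendsto (fun t : ℝ =>
          F ((t : ℂ) ^ 2 * x.1, (t : ℂ) * x.2.1, (t : ℂ) * x.2.2.1, t ^ 3 * x.2.2.2) / t ^ 3)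
        (𝓝[≠] (0 : ℝ)) (𝓝 0)) :
    (∀ W : Submodule ℝ (G4 × G4 × G4 × G4),
      (W : Set (G4 × G4 × G4 × G4)) ⊆ tangentGerms F → Module.rank ℝ ↥W ≤ 16) ∧
    (∀ W : Submodule ℝ (G4 × G4 × G4 × G4),
      (W : Set (G4 × G4 × G4 × G4)) ⊆ tangentGerms0 F → Module.rank ℝ ↥W ≤ 9) := by
  have hzero (X : tangentFields F) (h₀ : valueJet (weightedParts F X) = 0)
      (h₁ : derivJet (weightedParts F X) = 0) : fieldGerm X = 0 :=
    fieldGerm_eq_zero (eventuallyEq_zero_of_jet_eq_zero hF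
      (fun _ => taylorCoeff_baseRescale_eventually_eq_zero hF hF4) X.2.1 X.2.2 h₀ h₁)
  refine ⟨fun W hW => ?_, fun W hW => ?_⟩
  · refine (rank_le_of_le_map fieldGerm (hW.trans (tangentGerms_subset F))
      (valueJet.prod derivJet ∘ₗ weightedParts F)
      fun X hX => hzero X congr(($hX).1) congr(($hX).2)).trans_eq ?_
    rw [← Module.finrank_eq_rank]
    norm_num [Module.finrank_prod]
  · refine (rank_le_of_le_map fieldGerm (hW.trans (tangentGerms0_subset F))
      (derivJet ∘ₗ weightedParts F ∘ₗ Submodule.inclusion inf_le_left) fun X hX => ?_).trans_eq ?_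
    · exact hzero ⟨X, X.2.1⟩ (valueJet_eq_zero (weightedPart_apply_zero X.2.1.1 X.2.2)) hX
    · rw [← Module.finrank_eq_rank]
      norm_num [Module.finrank_prod]
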